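/- arXiv:2501.09572 — 2 statements merged into one kernel-verified Lean document; each statement's English description precedes it below -/
import Mathlib

section
/- There exists ε₀ > 0 such that for all 0 < ε ≤ ε₀, every λ ∈ ℝ, and every solution u of the Sturm–Liouville equation −(p(x)u'(x))' = λ·w(x)·u(x) on (x₀, 1−x₀): the limits lim_{x→x₀⁺} p(x)u'(x) and lim_{x→(1−x₀)⁻} p(x)u'(x) are both zero if and only if u extends to a function in C²([0,1]) satisfying φ₂(x)u''(x) + φ₁(x)u'(x) = λu(x) for all x ∈ [0,1]. In particular, the set of C²([0,1]) solutions of D_ε u = λu coincides with the set of solutions satisfying the quasi-Neumann condition lim_{x→y} p(x)u'(x) = 0 at both points y ∈ {x₀, 1−x₀}. -/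
open Real Set Filter Topology MeasureTheory

/-- The degenerate point `x₀ = (2 − √3)ε`. -/
noncomputable def x0 (ε : ℝ) : ℝ := (2 - Real.sqrt 3) * ε

/-- Leading coefficient `φ₂` of `D_ε` on the interval. -/
noncomputable def phi2 (ε x : ℝ) : ℝ :=
  if x ≤ ε then (1/12) * (1 - 4*(x/ε) + (x/ε)^2)
  else if x ≤ 1 - ε then -(1/6)
  else (1/12) * (1 - 4*((1-x)/ε) + ((1-x)/ε)^2)

/-- First-order coefficient `φ₁` of `D_ε` on the interval. -/
noncomputable def phi1 (ε x : ℝ) : ℝ :=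
  if x ≤ ε then -6 * (1 - x/ε) * ((1 + x/ε)^3)⁻¹
  else if x ≤ 1 - ε then 0
  else 6 * (1 - (1-x)/ε) * ((1 + (1-x)/ε)^3)⁻¹

/-- Integration-factor function `g` on `[0, ε]`. -/
noncomputable def gfun (ε x : ℝ) : ℝ :=
  Real.sign (x - x0 ε) * |x - x0 ε| ^ ((4 + 2*Real.sqrt 3) * ε) *
    |x - 4*ε + x0 ε| ^ ((4 - 2*Real.sqrt 3) * ε) *
    (x + ε) ^ (-(8*ε)) *
    Real.exp (12*ε^3/(ε+x)^2 + 12*ε^2/(ε+x))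

/-- Sturm–Liouville principal coefficient `p`. -/
noncomputable def pfun (ε x : ℝ) : ℝ :=
  if x ≤ ε then gfun ε x / (6 * gfun ε ε)
  else if x ≤ 1 - ε then 1/6
  else gfun ε (1-x) / (6 * gfun ε ε)

/-- Sturm–Liouville weight `w = -p/φ₂`. -/
noncomputable def wfun (ε x : ℝ) : ℝ := -pfun ε x / phi2 ε x

/-- `u` (with derivative `u'`) solves the Sturm–Liouville equation
`−(p u')' = λ w u` on `(x₀, 1−x₀)`. -/
def IsSLSol (ε lam : ℝ) (u u' : ℝ → ℝ) : Prop :=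
  ∀ x ∈ Ioo (x0 ε) (1 - x0 ε), HasDerivAt u (u' x) x ∧
    HasDerivAt (fun y => pfun ε y * u' y) (-(lam * wfun ε x * u x)) x


lemma rec_exists (F : ℕ → ℝ → ℝ → ℝ → ℝ → ℝ) : ∃ c c1 c2 c3 : ℕ → ℝ,
    c 0 = 1 ∧ c1 0 = 0 ∧ c2 0 = 0 ∧ c3 0 = 0 ∧
    (∀ n, c (n+1) = F n (c n) (c1 n) (c2 n) (c3 n)) ∧ (∀ n, c1 (n+1) = c n) ∧
    (∀ n, c2 (n+1) = c1 n) ∧ (∀ n, c3 (n+1) = c2 n) := by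
  let S : ℕ → ℝ × ℝ × ℝ × ℝ := fun n => Nat.rec (1,0,0,0)
    (fun n s => (F n s.1 s.2.1 s.2.2.1 s.2.2.2, s.1, s.2.1, s.2.2.1)) n
  exact ⟨fun n => (S n).1, fun n => (S n).2.1, fun n => (S n).2.2.1, fun n => (S n).2.2.2,
    rfl, rfl, rfl, rfl, fun n => rfl, fun n => rfl, fun n => rfl, fun n => rfl⟩

def Good (c : ℕ → ℝ) (r : ℝ) : Prop := ∀ q, 0 < q → q < r → Summable (fun n => |c n| * q ^ n)

def dd (c : ℕ → ℝ) : ℕ → ℝ := fun n => ((n:ℝ)+1) * c (n+1)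

lemma good_of_bdd (c : ℕ → ℝ) (r M : ℝ) (h : ∀ n, |c n| * r^n ≤ M) : Good c r := by
  intro q hq hqr
  have hr : 0 < r := hq.trans hqr
  have h1 : Summable (fun n : ℕ => M * (q/r)^n) :=
    (summable_geometric_of_lt_one (by positivity) ((div_lt_one hr).2 hqr)).mul_left M
  refine Summable.of_nonneg_of_le (fun n => by positivity) (fun n => ?_) h1
  have : |c n| * q^n = (|c n| * r^n) * (q/r)^n := by
    rw [div_pow]; field_simp
  rw [this]
  exact mul_le_mul_of_nonneg_right (h n) (by positivity)

lemma good_bound {c : ℕ → ℝ} {r q : ℝ} (h : Good c r) (hq : 0 < q) (hqr : q < r) :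
    Summable (fun n : ℕ => ((n:ℝ)+1) * |c (n+1)| * q^n) := by
  obtain ⟨k, hk1, hk2⟩ := exists_between hqr
  have hk : 0 < k := hq.trans hk1
  obtain ⟨M, hM⟩ := (h k hk hk2).tendsto_atTop_zero.bddAbove_range
  have hM' : ∀ n, |c n| * k^n ≤ M := fun n => hM ⟨n, rfl⟩
  have hlt : q/k < 1 := (div_lt_one hk).2 hk1
  have s0 : Summable (fun n : ℕ => (q/k)^n) := summable_geometric_of_lt_one (by positivity) hlt
  have s1 : Summable (fun n : ℕ => (n:ℝ)^1 * (q/k)^n) :=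
    summable_pow_mul_geometric_of_norm_lt_one 1 (by rw [Real.norm_eq_abs, abs_of_pos (by positivity)]; exact hlt)
  have s2 := (s1.add s0).mul_left (M/k)
  refine Summable.of_nonneg_of_le (fun n => by positivity) (fun n => ?_) s2
  have : ((n:ℝ)+1) * |c (n+1)| * q^n = (|c (n+1)| * k^(n+1)) * (((n:ℝ)+1) * (q/k)^n / k) := by
    rw [div_pow]; field_simp; ring
  rw [this]
  calc _ ≤ M * (((n:ℝ)+1) * (q/k)^n / k) := mul_le_mul_of_nonneg_right (hM' _) (by positivity)
    _ = _ := by ring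

lemma good_dd {c : ℕ → ℝ} {r : ℝ} (h : Good c r) : Good (dd c) r := by
  intro q hq hqr
  refine (good_bound h hq hqr).congr (fun n => ?_)
  rw [dd, abs_mul, abs_of_nonneg (by positivity : (0:ℝ) ≤ (n:ℝ)+1)]

lemma good_sum {c : ℕ → ℝ} {r s : ℝ} (h : Good c r) (hs : |s| < r) :
    HasSum (fun n => c n * s^n) (∑' n, c n * s^n) := by
  obtain ⟨q, h1, h2⟩ := exists_between hs
  have hq : 0 < q := (abs_nonneg s).trans_lt h1
  apply Summable.hasSum
  refine Summable.of_norm_bounded (h q hq h2) (fun n => ?_)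
  rw [Real.norm_eq_abs, abs_mul, abs_pow]
  gcongr

lemma good_deriv {c : ℕ → ℝ} {r s : ℝ} (h : Good c r) (hs : |s| < r) :
    HasDerivAt (fun s => ∑' n, c n * s^n) (∑' n, dd c n * s^n) s := by
  obtain ⟨q, h1, h2⟩ := exists_between hs
  have hq : 0 < q := (abs_nonneg s).trans_lt h1
  have hu : Summable (fun n : ℕ => (n:ℝ) * |c n| * q^(n-1)) := by
    rw [← summable_nat_add_iff 1]
    refine (good_bound h hq h2).congr (fun n => ?_)
    simp
  have key := hasDerivAt_tsum_of_isPreconnected (𝕜 := ℝ) (g := fun n (y:ℝ) => c n * y^n)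
    (g' := fun n y => c n * (n * y^(n-1))) (t := Ioo (-q) q) (y₀ := 0) (y := s) hu isOpen_Ioo
    isPreconnected_Ioo (fun n y _ => (hasDerivAt_pow n y).const_mul _) (fun n y hy => ?_)
    ⟨by linarith, hq⟩ (good_sum h (by rw [abs_zero]; linarith)).summable (abs_lt.1 h1)
  · have hs' : Summable (fun n : ℕ => c n * ((n:ℝ) * s^(n-1))) := by
      refine Summable.of_norm_bounded hu (fun n => ?_)
      rw [Real.norm_eq_abs, abs_mul, abs_mul, abs_pow, Nat.abs_cast]
      calc _ = (n:ℝ) * |c n| * |s|^(n-1) := by ring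
        _ ≤ _ := by gcongr
    have e : ∑' n, dd c n * s^n = ∑' n : ℕ, c n * ((n:ℝ) * s^(n-1)) := by
      rw [hs'.tsum_eq_zero_add]
      simp only [dd, Nat.cast_zero, zero_mul, mul_zero, zero_add]
      refine tsum_congr (fun n => ?_)
      rw [Nat.add_sub_cancel]
      push_cast
      ring
    rw [e]
    exact key
  · have : |y| ≤ q := (abs_lt.2 hy).le
    rw [Real.norm_eq_abs, abs_mul, abs_mul, abs_pow, Nat.abs_cast]
    calc _ = (n:ℝ) * |c n| * |y|^(n-1) := by ring
      _ ≤ _ := by gcongr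

def sh (f : ℕ → ℝ) : ℕ → ℝ
  | 0 => 0
  | (n+1) => f n

lemma sh_sum {f : ℕ → ℝ} {s S : ℝ} (h : HasSum (fun n => f n * s^n) S) :
    HasSum (fun n => sh f n * s^n) (s * S) := by
  have h2 := h.mul_left s
  have : HasSum (fun n => sh f (n+1) * s^(n+1)) (s * S) := by
    have e : (fun n => sh f (n+1) * s^(n+1)) = fun n => s * (f n * s^n) := by
      funext n
      simp only [sh]; ring
    rw [e]; exact h2
  rw [hasSum_nat_add_iff (f := fun n => sh f n * s^n) 1] at this
  simpa [sh] using this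

lemma num1 {N p q r : ℝ} (hN : 35 ≤ N) (hp : p ≤ 15) (hr : 0 ≤ r) :
    p * ((N-1)*N) + q * N + r ≤ 15*N^2 + (q+r)*N := by
  have h1 : 0 ≤ (N-1)*N := mul_nonneg (by linarith) (by linarith)
  have h2 := mul_le_mul_of_nonneg_right hp h1
  have h3 : r * 1 ≤ r * N := mul_le_mul_of_nonneg_left (by linarith) hr
  nlinarith

lemma num2 {N a b : ℝ} (hN : 35 ≤ N) (ha : 0 ≤ a) (hb : 0 ≤ b) (hab : a ≤ 4) (hb4 : b ≤ 4) :
    0 ≤ (N-a)*(N-b) ∧ (N-a)*(N-b) ≤ N^2 := by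
  refine ⟨mul_nonneg (by linarith) (by linarith), ?_⟩
  rw [sq]
  exact mul_le_mul (by linarith) (by linarith) (by linarith) (by linarith)

lemma num3 {N q r0 r1 r2 r3 : ℝ} (hN : 35 + q + r0 + r1 + r2 + r3 ≤ N) (hq : 0 ≤ q) (h0 : 0 ≤ r0)
    (h1 : 0 ≤ r1) (h2 : 0 ≤ r2) (h3 : 0 ≤ r3) :
    (15*N^2 + (q+r0)*N) * (3/10) + (17/2*N^2 + r1*N) * (3/10)^2
         + (1*N^2 + r2*N) * (3/10)^3 + (1*N^2+r3*N)*(3/10)^4 ≤ 7 * N * (N+1) := by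
  have hN0 : 0 ≤ N := by linarith
  have key : (15*N + (q+r0)) * (3/10) + (17/2*N + r1) * (3/10)^2
         + (1*N + r2) * (3/10)^3 + (1*N+r3)*(3/10)^4 ≤ 7 * (N+1) := by linarith
  have := mul_le_mul_of_nonneg_left key hN0
  linarith

set_option maxHeartbeats 1000000 in
lemma ser_bound {P1 P2 P3 P4 P5 Q0 Q1 R0 R1 R2 R3 : ℝ} (h1 : P1 ≤ -7) (h2 : |P2| ≤ 15)
    (h3 : |P3| ≤ 17/2) (h4 : |P4| ≤ 1) (h5 : |P5| ≤ 1) (hQ0 : Q0 ≤ 0) (c c1 c2 c3 : ℕ → ℝ)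
    (hc : ∀ n : ℕ, c (n+1) = -((P2*((n-1)*n)+Q1*n-R0) * c n + (P3*((n-2)*(n-1))-R1) * c1 n
      + (P4*((n-3)*(n-2))-R2) * c2 n + (P5*((n-4)*(n-3))-R3) * c3 n)/((P1*n+Q0)*(n+1)))
    (hc1 : ∀ n, c1 (n+1) = c n) (hc2 : ∀ n, c2 (n+1) = c1 n) (hc3 : ∀ n, c3 (n+1) = c2 n) :
    ∃ M, ∀ n, |c n| * (3/10:ℝ)^n ≤ M := by
  obtain ⟨K, hK⟩ := exists_nat_ge (15 + 20 + |Q1| + |R0| + |R1| + |R2| + |R3|)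
  let m : ℕ → ℝ := fun n => max (max (|c n| * (3/10:ℝ)^n) (|c1 n| * (3/10:ℝ)^n * (10/3)))
    (max (|c2 n| * (3/10:ℝ)^n * (10/3)^2) (|c3 n| * (3/10:ℝ)^n*(10/3)^3))
  have step : ∀ n ≥ K, m (n+1) ≤ m n := by
    intro n hn
    have hnK : (K:ℝ) ≤ n := by exact_mod_cast hn
    have a1 := abs_nonneg Q1
    have a2 := abs_nonneg R0
    have a3 := abs_nonneg R1
    have a4 := abs_nonneg R2
    have a5 := abs_nonneg R3
    set N : ℝ := (n:ℝ) with hN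
    have hN35 : 35 + |Q1| + |R0| + |R1| + |R2| + |R3| ≤ N := by linarith
    have e0 : |c n| * (3/10:ℝ)^n ≤ m n := le_trans (le_max_left _ _) (le_max_left _ _)
    have e1 : |c1 n| * (3/10:ℝ)^n * (10/3) ≤ m n := le_trans (le_max_right _ _) (le_max_left _ _)
    have e2 : |c2 n| * (3/10:ℝ)^n * (10/3)^2 ≤ m n :=
      le_trans (le_max_left _ _) (le_max_right _ _)
    have e3 : |c3 n| * (3/10:ℝ)^n * (10/3)^3 ≤ m n :=
      le_trans (le_max_right _ _) (le_max_right _ _)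
    have hm : 0 ≤ m n := le_trans (by positivity) e0
    have ex : ∀ z : ℝ, z * (3/10:ℝ)^(n+1) * (10/3) = z * (3/10:ℝ)^n := by
      intro z; rw [pow_succ]; ring
    refine max_le (max_le ?_ ?_) (max_le ?_ ?_)
    · -- main
      have hD : 7 * N * (N+1) ≤ |(P1*N+Q0)*(N+1)| := by
        rw [abs_mul, abs_of_nonneg (by linarith : 0 ≤ N+1)]
        apply mul_le_mul_of_nonneg_right _ (by linarith)
        rw [abs_of_nonpos (by nlinarith)]
        nlinarith
      have hDpos : 0 < |(P1*N+Q0)*(N+1)| := lt_of_lt_of_le (by nlinarith) hD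
      rw [hc n, ← hN, abs_div, abs_neg, div_mul_eq_mul_div, div_le_iff₀ hDpos]
      have b0 : |P2*((N-1)*N)+Q1*N-R0| ≤ 15*N^2 + (|Q1|+|R0|)*N := by
        calc _ ≤ |P2*((N-1)*N)| + |Q1*N| + |R0| :=
              (abs_sub _ _).trans (add_le_add_left (abs_add_le _ _) _)
          _ = |P2| * ((N-1)*N) + |Q1| * N + |R0| := by
              rw [abs_mul P2, abs_mul Q1, abs_of_nonneg (by nlinarith : 0 ≤ (N-1)*N),
                abs_of_nonneg (by linarith : 0 ≤ N)]
          _ ≤ _ := num1 (by linarith) h2 (abs_nonneg _)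
      have gen : ∀ P R B X : ℝ, |P| ≤ B → 0 ≤ X → X ≤ N^2 → |P*X - R| ≤ B*N^2 + |R| *N := by
        intro P R B X hP hX hX2
        calc _ ≤ |P*X| + |R| := abs_sub _ _
          _ = |P| *X + |R| := by rw [abs_mul, abs_of_nonneg hX]
          _ ≤ _ := by
            have := abs_nonneg R
            have := mul_le_mul hP hX2 hX ((abs_nonneg P).trans hP)
            have : |R| * 1 ≤ |R| * N := mul_le_mul_of_nonneg_left (by linarith) (abs_nonneg R)
            linarith
      have b1 := gen P3 R1 _ ((N-2)*(N-1)) h3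
        (num2 (by linarith) (by norm_num) (by norm_num) (by norm_num) (by norm_num)).1
        (num2 (by linarith) (by norm_num) (by norm_num) (by norm_num) (by norm_num)).2
      have b2 := gen P4 R2 _ ((N-3)*(N-2)) h4
        (num2 (by linarith) (by norm_num) (by norm_num) (by norm_num) (by norm_num)).1
        (num2 (by linarith) (by norm_num) (by norm_num) (by norm_num) (by norm_num)).2
      have b3 := gen P5 R3 _ ((N-4)*(N-3)) h5
        (num2 (by linarith) (by norm_num) (by norm_num) (by norm_num) (by norm_num)).1
        (num2 (by linarith) (by norm_num) (by norm_num) (by norm_num) (by norm_num)).2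
      have tri : ∀ a b c d : ℝ, |a+b+c+d| ≤ |a|+|b|+|c|+|d| := by
        intro a b c d
        have := abs_add_le (a+b+c) d
        have := abs_add_le (a+b) c
        have := abs_add_le a b
        linarith
      have t := tri ((P2*((N-1)*N)+Q1*N-R0) * c n) ((P3*((N-2)*(N-1))-R1) * c1 n)
        ((P4*((N-3)*(N-2))-R2) * c2 n) ((P5*((N-4)*(N-3))-R3) * c3 n)
      rw [abs_mul, abs_mul, abs_mul, abs_mul] at t
      have hp : (0:ℝ) ≤ (3/10:ℝ)^n := by positivity
      have f0 := mul_le_mul b0 e0 (by positivity) (by positivity)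
      have f1 := mul_le_mul b1 e1 (by positivity) (by positivity)
      have f2 := mul_le_mul b2 e2 (by positivity) (by positivity)
      have f3 := mul_le_mul b3 e3 (by positivity) (by positivity)
      have t2 := mul_le_mul_of_nonneg_right t (by positivity : (0:ℝ) ≤ (3/10:ℝ)^(n+1))
      refine t2.trans ?_
      have fin : (15*N^2 + (|Q1|+|R0|)*N) * (3/10) + (17/2*N^2 + |R1| *N) * (3/10)^2
         + (1*N^2 + |R2| *N) * (3/10)^3 + (1*N^2+|R3| *N)*(3/10)^4 ≤ |(P1*N+Q0)*(N+1)| := by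
        exact le_trans (num3 hN35 a1 a2 a3 a4 a5) hD
      have fin2 := mul_le_mul_of_nonneg_left fin hm
      refine le_trans ?_ fin2
      rw [pow_succ]
      linarith
    · rw [hc1, ex]; exact e0
    · rw [hc2]
      calc _ = |c1 n| * (3/10:ℝ)^n * (10/3) := by rw [pow_succ]; ring
        _ ≤ _ := e1
    · rw [hc3]
      calc _ = |c2 n| * (3/10:ℝ)^n * (10/3)^2 := by rw [pow_succ]; ring
        _ ≤ _ := e2
  have hmK : ∀ n ≥ K, m n ≤ m K := by
    intro n hn
    induction n, hn using Nat.le_induction with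
    | base => exact le_rfl
    | succ n hn ih => exact (step n hn).trans ih
  have hle : ∀ n, |c n| * (3/10:ℝ)^n ≤ m n := fun n =>
    le_trans (le_max_left _ _) (le_max_left _ _)
  refine ⟨∑ i ∈ Finset.range (K+1), m i, fun n => ?_⟩
  have hm0 : ∀ n, 0 ≤ m n := fun n => le_trans (by positivity) (hle n)
  by_cases hn : n < K+1
  · exact (hle n).trans (Finset.single_le_sum (fun i _ => hm0 i) (Finset.mem_range.2 hn))
  · exact ((hle n).trans (hmK n (by omega))).trans
      (Finset.single_le_sum (f := m) (fun i _ => hm0 i) (Finset.mem_range.2 (by omega)))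

lemma ser_sol {P1 P2 P3 P4 P5 Q0 Q1 R0 R1 R2 R3 : ℝ} (h1 : P1 ≤ -7) (h2 : |P2| ≤ 15)
    (h3 : |P3| ≤ 17/2) (h4 : |P4| ≤ 1) (h5 : |P5| ≤ 1) (hQ0 : Q0 < 0) :
    ∃ Y Y1 Y2 : ℝ → ℝ, Y 0 = 1 ∧ ∀ s, |s| < 3/10 → HasDerivAt Y (Y1 s) s ∧
      HasDerivAt Y1 (Y2 s) s ∧ ContinuousAt Y2 s ∧
      (P1*s+P2*s^2+P3*s^3+P4*s^4+P5*s^5) * Y2 s + (Q0+Q1*s) * Y1 s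
        = (R0+R1*s+R2*s^2+R3*s^3) * Y s := by
  obtain ⟨c, c1, c2, c3, z0, z1, z2, z3, hc, hc1, hc2, hc3⟩ := rec_exists
    (fun n a b e f => -((P2*((n-1)*n)+Q1*n-R0) * a + (P3*((n-2)*(n-1))-R1) * b
      + (P4*((n-3)*(n-2))-R2) * e + (P5*((n-4)*(n-3))-R3) * f)/((P1*n+Q0)*(n+1)))
  obtain ⟨M, hM⟩ := ser_bound h1 h2 h3 h4 h5 hQ0.le c c1 c2 c3 hc hc1 hc2 hc3
  have g0 : Good c (3/10) := good_of_bdd c _ M hM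
  have g1 := good_dd g0
  have g2 := good_dd g1
  refine ⟨fun s => ∑' n, c n * s^n, fun s => ∑' n, dd c n * s^n, fun s => ∑' n, dd (dd c) n * s^n,
    ?_, fun s hs => ⟨good_deriv g0 hs, good_deriv g1 hs, (good_deriv g2 hs).continuousAt, ?_⟩⟩
  · show ∑' n, c n * (0:ℝ)^n = 1
    rw [tsum_eq_single 0]
    · simp [z0]
    · intro n hn; simp [hn]
  · have s0 := good_sum g0 hs
    have s1 := good_sum g1 hs
    have s2 := good_sum g2 hs
    simp only
    set A := ∑' n, c n * s^n
    set B := ∑' n, dd c n * s^n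
    set C := ∑' n, dd (dd c) n * s^n
    have t1 := sh_sum s2
    have t2 := sh_sum t1
    have t3 := sh_sum t2
    have t4 := sh_sum t3
    have t5 := sh_sum t4
    have q1 := sh_sum s1
    have r1 := sh_sum s0
    have r2 := sh_sum r1
    have r3 := sh_sum r2
    have tot := (((((((t1.mul_left P1).add (t2.mul_left P2)).add (t3.mul_left P3)).add
      (t4.mul_left P4)).add (t5.mul_left P5)).add (s1.mul_left Q0)).add (q1.mul_left Q1)).sub
      ((((s0.mul_left R0).add (r1.mul_left R1)).add (r2.mul_left R2)).add (r3.mul_left R3))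
    have hD : ∀ n : ℕ, (P1*n+Q0)*((n:ℝ)+1) ≠ 0 := by
      intro n
      have : (0:ℝ) ≤ n := Nat.cast_nonneg n
      apply mul_ne_zero
      · nlinarith
      · positivity
    have hrec : ∀ n : ℕ, (P1*n+Q0)*((n:ℝ)+1) * c (n+1) = -((P2*((n-1)*n)+Q1*n-R0) * c n + (P3*((n-2)*(n-1))-R1) * c1 n
      + (P4*((n-3)*(n-2))-R2) * c2 n + (P5*((n-4)*(n-3))-R3) * c3 n) := by
      intro n
      rw [hc n, mul_div_assoc', mul_comm, mul_div_assoc, div_self (hD n), mul_one]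
    have zero : ∀ n, P1 * sh (dd (dd c)) n + P2 * sh (sh (dd (dd c))) n
        + P3 * sh (sh (sh (dd (dd c)))) n + P4 * sh (sh (sh (sh (dd (dd c))))) n
        + P5 * sh (sh (sh (sh (sh (dd (dd c)))))) n + Q0 * dd c n + Q1 * sh (dd c) n
        - (R0 * c n + R1 * sh c n + R2 * sh (sh c) n + R3 * sh (sh (sh c)) n) = 0 := by
      intro n
      have hh := hrec n
      rcases n with _ | _ | _ | _ | _ | n
      all_goals
        simp only [sh, dd, hc1, hc2, hc3, z1, z2, z3, zero_add] at hh ⊢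
        push_cast at hh ⊢
        linear_combination hh
    have tot0 := tot.tsum_eq.symm.trans ((tsum_congr (g := fun _ => (0:ℝ)) (fun n => by
      linear_combination (s^n) * zero n)).trans tsum_zero)
    linear_combination tot0


lemma s3sq : √3 * √3 = (3:ℝ) := Real.mul_self_sqrt (by norm_num)
lemma s3lo : (1.732:ℝ) < √3 := Real.lt_sqrt_of_sq_lt (by norm_num)
lemma s3hi : √3 < (1.7321:ℝ) := by rw [Real.sqrt_lt' (by norm_num)]; norm_num

lemma x0_bds {ε : ℝ} (h : 0 < ε) : 0.2679 * ε < x0 ε ∧ x0 ε < 0.268 * ε := by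
  unfold x0
  constructor <;> apply mul_lt_mul_of_pos_right _ h <;> linarith [s3lo, s3hi]

lemma phi2_symm {ε : ℝ} (h : 0 < ε) (h2 : ε ≤ 1/10) (x : ℝ) : phi2 ε (1-x) = phi2 ε x := by
  unfold phi2
  have e1 : ε / ε = 1 := div_self h.ne'
  rw [show 1 - (1-x) = x by ring]
  rcases lt_trichotomy x ε with hx | hx | hx
  · rw [if_neg (by linarith), if_neg (by linarith), if_pos hx.le]
  · subst hx
    rw [if_neg (by linarith), if_pos (by linarith), if_pos le_rfl, e1]; norm_num
  · rw [if_neg (by linarith : ¬ x ≤ ε)]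
    rcases lt_trichotomy x (1-ε) with hy | hy | hy
    · rw [if_neg (by linarith), if_pos (by linarith), if_pos hy.le]
    · subst hy
      rw [show 1 - (1-ε) = ε by ring, if_pos le_rfl, if_pos le_rfl, e1]; norm_num
    · rw [if_pos (by linarith), if_neg (by linarith)]

lemma phi1_symm {ε : ℝ} (h : 0 < ε) (h2 : ε ≤ 1/10) (x : ℝ) : phi1 ε (1-x) = -phi1 ε x := by
  unfold phi1
  have e1 : ε / ε = 1 := div_self h.ne'
  rw [show 1 - (1-x) = x by ring]
  rcases lt_trichotomy x ε with hx | hx | hx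
  · rw [if_neg (by linarith), if_neg (by linarith), if_pos hx.le]; ring
  · subst hx
    rw [if_neg (by linarith), if_pos (by linarith), if_pos le_rfl, e1]; norm_num
  · rw [if_neg (by linarith : ¬ x ≤ ε)]
    rcases lt_trichotomy x (1-ε) with hy | hy | hy
    · rw [if_neg (by linarith), if_pos (by linarith), if_pos hy.le]; ring
    · subst hy
      rw [show 1 - (1-ε) = ε by ring, if_pos le_rfl, if_pos le_rfl, e1]; norm_num
    · rw [if_pos (by linarith), if_neg (by linarith)]; ring

noncomputable def hh (ε x : ℝ) : ℝ := |x - 4*ε + x0 ε| ^ ((4 - 2*Real.sqrt 3) * ε) *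
    (x + ε) ^ (-(8*ε)) * Real.exp (12*ε^3/(ε+x)^2 + 12*ε^2/(ε+x))

lemma gfun_eq {ε x : ℝ} (hx : x0 ε < x) :
    gfun ε x = (x - x0 ε)^((4 + 2*Real.sqrt 3) * ε) * hh ε x := by
  unfold gfun hh
  rw [Real.sign_of_pos (by linarith), abs_of_pos (by linarith : 0 < x - x0 ε)]
  ring

lemma hh_pos {ε x : ℝ} (h : 0 < ε) (hx : x0 ε ≤ x) (hx2 : x < 2*ε) : 0 < hh ε x := by
  have := x0_bds h
  unfold hh
  have h1 : 0 < |x - 4*ε + x0 ε| := abs_pos.2 (by linarith)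
  have h2 : 0 < x + ε := by linarith
  positivity

lemma hh_cont {ε x : ℝ} (h : 0 < ε) (hx : x0 ε ≤ x) (hx2 : x < 2*ε) : ContinuousAt (hh ε) x := by
  have := x0_bds h
  unfold hh
  have h1 : |x - 4*ε + x0 ε| ≠ 0 := abs_ne_zero.2 (by linarith)
  have h2 : x + ε ≠ 0 := by linarith
  have h3 : ε + x ≠ 0 := by linarith
  refine ContinuousAt.mul (ContinuousAt.mul ?_ ?_) ?_
  · exact ContinuousAt.rpow_const (by fun_prop) (Or.inl h1)
  · exact ContinuousAt.rpow_const (by fun_prop) (Or.inl h2)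
  · have : (ε+x)^2 ≠ 0 := pow_ne_zero _ h3
    fun_prop (disch := assumption)

lemma gfun_pos {ε x : ℝ} (h : 0 < ε) (hx : x0 ε < x) (hx2 : x < 2*ε) : 0 < gfun ε x := by
  rw [gfun_eq hx]
  exact mul_pos (Real.rpow_pos_of_pos (by linarith) _) (hh_pos h hx.le hx2)

lemma geps_pos {ε : ℝ} (h : 0 < ε) : 0 < gfun ε ε :=
  gfun_pos h (by linarith [x0_bds h]) (by linarith)

lemma pfun_symm {ε : ℝ} (h : 0 < ε) (h2 : ε ≤ 1/10) (x : ℝ) : pfun ε (1-x) = pfun ε x := by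
  unfold pfun
  have e1 : gfun ε ε / (6 * gfun ε ε) = 1/6 := by
    have := (geps_pos h).ne'
    field_simp
  rw [show 1 - (1-x) = x by ring]
  rcases lt_trichotomy x ε with hx | hx | hx
  · rw [if_neg (by linarith), if_neg (by linarith), if_pos hx.le]
  · subst hx
    rw [if_neg (by linarith), if_pos (by linarith), if_pos le_rfl, e1]
  · rw [if_neg (by linarith : ¬ x ≤ ε)]
    rcases lt_trichotomy x (1-ε) with hy | hy | hy
    · rw [if_neg (by linarith), if_pos (by linarith), if_pos hy.le]
    · subst hy
      rw [show 1 - (1-ε) = ε by ring, if_pos le_rfl, if_pos le_rfl, e1]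
    · rw [if_pos (by linarith), if_neg (by linarith)]

lemma phi2_neg_left {ε x : ℝ} (h : 0 < ε) (hx : x0 ε < x) (hx2 : x ≤ ε) : phi2 ε x < 0 := by
  unfold phi2
  rw [if_pos hx2]
  have h1 : 2 - √3 < x/ε := by rw [lt_div_iff₀ h]; exact hx
  have h3 : x/ε ≤ 1 := by rw [div_le_one h]; exact hx2
  have : 1 - 4*(x/ε) + (x/ε)^2 = (x/ε - (2-√3)) * (x/ε - (2+√3)) := by linear_combination s3sq
  rw [this]
  have := mul_neg_of_pos_of_neg (sub_pos.2 h1) (by linarith [s3lo] : x/ε - (2+√3) < 0)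
  linarith

lemma phi2_neg {ε x : ℝ} (h : 0 < ε) (h2 : ε ≤ 1/10) (hx : x ∈ Ioo (x0 ε) (1 - x0 ε)) :
    phi2 ε x < 0 := by
  obtain ⟨h1, h3⟩ := hx
  by_cases hx : x ≤ ε
  · exact phi2_neg_left h h1 hx
  · by_cases hy : x ≤ 1 - ε
    · unfold phi2; rw [if_neg hx, if_pos hy]; norm_num
    · rw [← phi2_symm h h2]
      exact phi2_neg_left h (by linarith) (by linarith)

lemma pfun_pos {ε x : ℝ} (h : 0 < ε) (h2 : ε ≤ 1/10) (hx : x ∈ Ioo (x0 ε) (1 - x0 ε)) :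
    0 < pfun ε x := by
  obtain ⟨h1, h3⟩ := hx
  have hg := geps_pos h
  unfold pfun
  split_ifs with ha hb
  · have := gfun_pos h h1 (by linarith); positivity
  · norm_num
  · have := gfun_pos h (by linarith : x0 ε < 1 - x) (by linarith); positivity

noncomputable def clip (ε x : ℝ) : ℝ := max 0 (min x ε) / ε

lemma clip_cont (ε : ℝ) : Continuous (clip ε) := by unfold clip; fun_prop
lemma clip_nonneg {ε : ℝ} (h : 0 < ε) (x : ℝ) : 0 ≤ clip ε x := by unfold clip; positivity

lemma clip_lo {ε x : ℝ} (h0 : 0 ≤ x) (h1 : x ≤ ε) : clip ε x = x/ε := by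
  unfold clip; rw [min_eq_left h1, max_eq_right h0]
lemma clip_hi {ε x : ℝ} (h : 0 < ε) (h1 : ε ≤ x) : clip ε x = 1 := by
  unfold clip; rw [min_eq_right h1, max_eq_right h.le, div_self h.ne']

lemma phi1_clip {ε x : ℝ} (h : 0 < ε) (h2 : ε ≤ 1/10) (hx : x ∈ Icc (0:ℝ) 1) :
    phi1 ε x = -6 * (1 - clip ε x) * ((1 + clip ε x)^3)⁻¹
      - (-6 * (1 - clip ε (1-x)) * ((1 + clip ε (1-x))^3)⁻¹) := by
  obtain ⟨h0, h1⟩ := hx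
  unfold phi1
  split_ifs with ha hb
  · rw [clip_lo h0 ha, clip_hi h (by linarith : ε ≤ 1-x)]; ring
  · rw [clip_hi h (by linarith : ε ≤ x), clip_hi h (by linarith : ε ≤ 1-x)]; ring
  · rw [clip_hi h (by linarith : ε ≤ x), clip_lo (by linarith) (by linarith : 1-x ≤ ε)]; ring

lemma phi2_clip {ε x : ℝ} (h : 0 < ε) (h2 : ε ≤ 1/10) (hx : x ∈ Icc (0:ℝ) 1) :
    phi2 ε x = (1/12) * (1 - 4*clip ε x + (clip ε x)^2)
      + (1/12) * (1 - 4*clip ε (1-x) + (clip ε (1-x))^2) + 1/6 := by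
  obtain ⟨h0, h1⟩ := hx
  unfold phi2
  split_ifs with ha hb
  · rw [clip_lo h0 ha, clip_hi h (by linarith : ε ≤ 1-x)]; ring
  · rw [clip_hi h (by linarith : ε ≤ x), clip_hi h (by linarith : ε ≤ 1-x)]; ring
  · rw [clip_hi h (by linarith : ε ≤ x), clip_lo (by linarith) (by linarith : 1-x ≤ ε)]; ring

lemma phi1_cont {ε x : ℝ} (h : 0 < ε) (h2 : ε ≤ 1/10) (hx : x ∈ Ioo (0:ℝ) 1) :
    ContinuousAt (phi1 ε) x := by
  have hc := clip_cont ε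
  have hn : ∀ y, (1 + clip ε y)^3 ≠ 0 := fun y => by
    have := clip_nonneg h y; positivity
  have : Continuous (fun x => -6 * (1 - clip ε x) * ((1 + clip ε x)^3)⁻¹
      - (-6 * (1 - clip ε (1-x)) * ((1 + clip ε (1-x))^3)⁻¹)) := by
    have k1 : Continuous (fun x => ((1 + clip ε x)^3)⁻¹) :=
      Continuous.inv₀ (by fun_prop) hn
    have k2 : Continuous (fun x => ((1 + clip ε (1-x))^3)⁻¹) :=
      Continuous.inv₀ (by fun_prop) (fun x => hn (1-x))
    fun_prop
  refine this.continuousAt.congr ?_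
  filter_upwards [Ioo_mem_nhds hx.1 hx.2] with y hy
  exact (phi1_clip h h2 ⟨hy.1.le, hy.2.le⟩).symm

lemma phi2_cont {ε x : ℝ} (h : 0 < ε) (h2 : ε ≤ 1/10) (hx : x ∈ Ioo (0:ℝ) 1) :
    ContinuousAt (phi2 ε) x := by
  have hc := clip_cont ε
  have : Continuous (fun x => (1/12) * (1 - 4*clip ε x + (clip ε x)^2)
      + (1/12) * (1 - 4*clip ε (1-x) + (clip ε (1-x))^2) + 1/6) := by
    fun_prop
  refine this.continuousAt.congr ?_
  filter_upwards [Ioo_mem_nhds hx.1 hx.2] with y hy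
  exact (phi2_clip h h2 ⟨hy.1.le, hy.2.le⟩).symm

lemma gfun_deriv {ε x : ℝ} (h : 0 < ε) (hx : x0 ε < x) (hx2 : x < 2*ε) :
    HasDerivAt (gfun ε) (gfun ε x * ((-6 * (1 - x/ε) * ((1 + x/ε)^3)⁻¹) /
      ((1/12) * (1 - 4*(x/ε) + (x/ε)^2)))) x := by
  have hb := x0_bds h
  let L : ℝ → ℝ := fun y => (4 + 2*√3)*ε * Real.log (y - x0 ε)
    + (4 - 2*√3)*ε * Real.log (4*ε - x0 ε - y) + (-(8*ε)) * Real.log (y + ε)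
    + (12*ε^3/(ε+y)^2 + 12*ε^2/(ε+y))
  have hL : ∀ y, x0 ε < y → y < 2*ε → gfun ε y = Real.exp (L y) := by
    intro y h1 h2
    rw [gfun_eq h1, hh, abs_of_neg (by linarith), Real.rpow_def_of_pos (by linarith),
      Real.rpow_def_of_pos (by linarith), Real.rpow_def_of_pos (by linarith),
      ← Real.exp_add, ← Real.exp_add, ← Real.exp_add]
    congr 1
    simp only [L]
    rw [show -(y - 4*ε + x0 ε) = 4*ε - x0 ε - y by ring]
    ring
  have n1 : x - x0 ε ≠ 0 := by linarith
  have n2 : 4*ε - x0 ε - x ≠ 0 := by linarith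
  have n3 : x + ε ≠ 0 := by linarith
  have n4 : ε + x ≠ 0 := by linarith
  have d1 : HasDerivAt (fun y => Real.log (y - x0 ε)) (1/(x - x0 ε)) x :=
    ((hasDerivAt_id x).sub_const _).log n1
  have d2 : HasDerivAt (fun y => Real.log (4*ε - x0 ε - y)) (-1/(4*ε - x0 ε - x)) x :=
    ((hasDerivAt_id x).const_sub _).log n2
  have d3 : HasDerivAt (fun y => Real.log (y + ε)) (1/(x + ε)) x :=
    ((hasDerivAt_id x).add_const _).log n3
  have d0 : HasDerivAt (fun y => ε + y) 1 x := (hasDerivAt_id x).const_add ε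
  have d4 := (hasDerivAt_const x (12*ε^3)).div (d0.pow 2) (pow_ne_zero 2 n4)
  have d5 := (hasDerivAt_const x (12*ε^2)).div d0 n4
  have dL := (((d1.const_mul ((4 + 2*√3)*ε)).add (d2.const_mul ((4 - 2*√3)*ε))).add
    (d3.const_mul (-(8*ε)))).add (d4.add d5)
  have dE : HasDerivAt (fun y => Real.exp (L y)) _ x := HasDerivAt.exp (f := L) dL
  rw [← hL x hx hx2] at dE
  have ee : gfun ε =ᶠ[𝓝 x] fun y => Real.exp (L y) := by
    filter_upwards [Ioo_mem_nhds hx hx2] with y hy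
    exact hL y hy.1 hy.2
  refine (dE.congr_of_eventuallyEq ee).congr_deriv ?_
  congr 1
  -- algebra
  have hx' : x = (x/ε) * ε := by field_simp
  set t := x/ε with ht
  have hx0 : x0 ε = (2-√3)*ε := rfl
  rw [hx0] at n1 n2 ⊢
  rw [hx'] at n1 n2 n3 n4 ⊢
  have m1 : t - (2-√3) ≠ 0 := fun hz => n1 (by rw [← sub_mul, hz, zero_mul])
  have m2 : t - (2+√3) ≠ 0 := fun hz => n2 (by linear_combination (-ε) * hz)
  have m3 : 1 + t ≠ 0 := fun hz => n3 (by linear_combination ε * hz)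
  have m4 : 1 - 4*t + t^2 ≠ 0 := by
    have : 1 - 4*t + t^2 = (t - (2-√3)) * (t - (2+√3)) := by linear_combination s3sq
    rw [this]; exact mul_ne_zero m1 m2
  have r1 : (4 + 2*√3)*ε * (1/(t*ε - (2-√3)*ε)) + (4 - 2*√3)*ε * (-1/(4*ε - (2-√3)*ε - t*ε))
      = (8*t-28)/(1 - 4*t + t^2) := by
    have a1 : t*ε - (2-√3)*ε = (t - (2-√3))*ε := by ring
    have a2 : 4*ε - (2-√3)*ε - t*ε = -((t - (2+√3))*ε) := by ring
    have a3 : 1 - 4*t + t^2 = (t - (2-√3)) * (t - (2+√3)) := by linear_combination s3sq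
    rw [a1, a2, a3]
    have e := h.ne'
    generalize hA : t - (2-√3) = A at *
    generalize hB : t - (2+√3) = B at *
    field_simp
    rw [← hA, ← hB]
    linear_combination (-4) * s3sq
  have r2 : ε + t*ε = ε*(1+t) := by ring
  have r3 : t*ε + ε = ε*(1+t) := by ring
  rw [r1]
  simp only [Pi.pow_apply, r2, r3]
  have e := h.ne'
  generalize hq : 1 - 4*t + t^2 = q at *
  field_simp
  rw [← hq]
  ring

lemma pfun_deriv_left {ε x : ℝ} (h : 0 < ε) (h2 : ε ≤ 1/10) (hx : x0 ε < x) (hx2 : x ≤ 1/2) :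
    HasDerivAt (pfun ε) (pfun ε x * (phi1 ε x / phi2 ε x)) x := by
  have hgn := (geps_pos h).ne'
  have hb := x0_bds h
  rcases lt_trichotomy x ε with hl | hl | hl
  · have d := (gfun_deriv h hx (by linarith)).div_const (6 * gfun ε ε)
    have ee : pfun ε =ᶠ[𝓝 x] fun y => gfun ε y / (6 * gfun ε ε) := by
      filter_upwards [Iio_mem_nhds hl] with y hy
      unfold pfun; rw [if_pos (le_of_lt hy)]
    refine (d.congr_of_eventuallyEq ee).congr_deriv ?_
    unfold pfun phi1 phi2
    rw [if_pos hl.le, if_pos hl.le, if_pos hl.le]; ring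
  · subst hl
    have d := (gfun_deriv h hx (by linarith)).div_const (6 * gfun x x)
    have z : phi1 x x = 0 := by
      unfold phi1; rw [if_pos le_rfl, div_self h.ne']; norm_num
    rw [z, zero_div, mul_zero]
    rw [div_self h.ne'] at d
    have d' : HasDerivAt (fun y => gfun x y / (6 * gfun x x)) 0 x := by
      refine d.congr_deriv ?_; norm_num
    have w1 : HasDerivWithinAt (pfun x) 0 (Iic x) x := by
      refine d'.hasDerivWithinAt.congr (fun y hy => ?_) ?_
      · unfold pfun; rw [if_pos (mem_Iic.1 hy)]
      · unfold pfun; rw [if_pos le_rfl]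
    have w2 : HasDerivWithinAt (pfun x) 0 (Ici x) x := by
      refine (hasDerivWithinAt_const x (Ici x) (1/6:ℝ)).congr_of_eventuallyEq ?_ ?_
      · have : Iio (1-x) ∈ 𝓝[Ici x] x := mem_nhdsWithin_of_mem_nhds (Iio_mem_nhds (by linarith))
        filter_upwards [this, self_mem_nhdsWithin] with y hy hy2
        unfold pfun
        have hy' : y < 1 - x := hy
        have hy2' : x ≤ y := hy2
        rcases hy2'.eq_or_lt with e | e
        · subst e; rw [if_pos le_rfl]; field_simp
        · rw [if_neg (by linarith), if_pos (by linarith)]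
      · unfold pfun; rw [if_pos le_rfl]; field_simp
    have := w1.union w2
    rwa [Iic_union_Ici, hasDerivWithinAt_univ] at this
  · have z : phi1 ε x = 0 := by
      unfold phi1; rw [if_neg (by linarith), if_pos (by linarith)]
    rw [z, zero_div, mul_zero]
    refine (hasDerivAt_const x (1/6:ℝ)).congr_of_eventuallyEq ?_
    filter_upwards [Ioo_mem_nhds hl (by linarith : x < 1-ε)] with y hy
    unfold pfun; rw [if_neg (by linarith [hy.1]), if_pos hy.2.le]

lemma pfun_deriv {ε x : ℝ} (h : 0 < ε) (h2 : ε ≤ 1/10) (hx : x ∈ Ioo (x0 ε) (1 - x0 ε)) :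
    HasDerivAt (pfun ε) (pfun ε x * (phi1 ε x / phi2 ε x)) x := by
  by_cases hx2 : x ≤ 1/2
  · exact pfun_deriv_left h h2 hx.1 hx2
  · have d := pfun_deriv_left h h2 (x := 1-x) (by linarith [hx.2]) (by linarith)
    have d2 := HasDerivAt.comp x d ((hasDerivAt_id x).const_sub 1)
    rw [pfun_symm h h2, phi1_symm h h2, phi2_symm h h2] at d2
    have ee : pfun ε = pfun ε ∘ (fun y => 1 - id y) := by
      funext y; exact (pfun_symm h h2 y).symm
    rw [ee]
    refine d2.congr_deriv ?_
    simp only [Function.comp, id]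
    rw [pfun_symm h h2]; ring

lemma pfun_lower {ε : ℝ} (h : 0 < ε) : ∃ c > 0, ∀ x, x0 ε < x → x ≤ ε →
    c * (x - x0 ε)^((4 + 2*Real.sqrt 3) * ε) ≤ pfun ε x := by
  have hb := x0_bds h
  have hg := geps_pos h
  obtain ⟨m, hm, hmin⟩ := isCompact_Icc.exists_isMinOn (⟨ε, by linarith, le_rfl⟩ : (Icc (x0 ε) ε).Nonempty)
    (f := hh ε) (fun x hx => (hh_cont h hx.1 (by linarith [hx.2])).continuousWithinAt)
  have hp := hh_pos h hm.1 (by linarith [hm.2])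
  refine ⟨hh ε m / (6 * gfun ε ε), by positivity, fun x h1 h2 => ?_⟩
  unfold pfun
  rw [if_pos h2, gfun_eq h1, div_mul_eq_mul_div]
  have := hmin (show x ∈ Icc (x0 ε) ε from ⟨h1.le, h2⟩)
  have this' : hh ε m ≤ hh ε x := this
  have : 0 ≤ (x - x0 ε)^((4 + 2*Real.sqrt 3) * ε) := Real.rpow_nonneg (by linarith) _
  rw [mul_comm]
  gcongr

lemma pfun_tendsto {ε : ℝ} (h : 0 < ε) : Tendsto (pfun ε) (𝓝[>] (x0 ε)) (𝓝 0) := by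
  have hb := x0_bds h
  have ha : 0 < (4 + 2*Real.sqrt 3) * ε := by positivity
  have c1 : ContinuousAt (fun x => (x - x0 ε)^((4 + 2*Real.sqrt 3) * ε) * hh ε x / (6 * gfun ε ε)) (x0 ε) := by
    refine ContinuousAt.div_const (ContinuousAt.mul ?_ (hh_cont h le_rfl (by linarith))) _
    exact ContinuousAt.rpow_const (by fun_prop) (Or.inr ha.le)
  have c2 := c1.tendsto
  simp only [sub_self, Real.zero_rpow ha.ne', zero_mul, zero_div] at c2
  refine (c2.mono_left nhdsWithin_le_nhds).congr' ?_
  have : Iio ε ∈ 𝓝[>] (x0 ε) := mem_nhdsWithin_of_mem_nhds (Iio_mem_nhds (by linarith))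
  filter_upwards [this, self_mem_nhdsWithin] with y hy hy2
  unfold pfun
  rw [if_pos (le_of_lt hy), gfun_eq hy2]


def LSol (ε lam : ℝ) (y y1 y2 : ℝ → ℝ) : Prop :=
  ∀ x, |x - x0 ε| < 3/10 * ε → HasDerivAt y (y1 x) x ∧ HasDerivAt y1 (y2 x) x ∧
    ContinuousAt y2 x ∧ phi2 ε x * y2 x + phi1 ε x * y1 x = lam * y x

lemma sol_exists {ε : ℝ} (h : 0 < ε) (lam : ℝ) :
    ∃ y y1 y2 : ℝ → ℝ, y (x0 ε) = 1 ∧ LSol ε lam y y1 y2 := by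
  have lo := s3lo
  have hi := s3hi
  have hb := x0_bds h
  obtain ⟨Y, Y1, Y2, hY0, hY⟩ := ser_sol (P1 := 180 - 108*√3) (P2 := 162 - 102*√3)
    (P3 := 54 - 36*√3) (P4 := 9 - 5*√3) (P5 := 1) (Q0 := -(72*ε*(√3-1))) (Q1 := 72*ε)
    (R0 := 12*lam*ε^2*(54-30*√3)) (R1 := 36*lam*ε^2*(12-6*√3)) (R2 := 36*lam*ε^2*(3-√3))
    (R3 := 12*lam*ε^2) (by linarith) (abs_le.2 ⟨by linarith, by linarith⟩)
    (abs_le.2 ⟨by linarith, by linarith⟩) (abs_le.2 ⟨by linarith, by linarith⟩) (by norm_num)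
    (by have : 0 < 72*ε*(√3-1) := by
          apply mul_pos (by positivity); linarith
        linarith)
  refine ⟨fun x => Y ((x - x0 ε)/ε), fun x => Y1 ((x - x0 ε)/ε)/ε, fun x => Y2 ((x - x0 ε)/ε)/ε^2,
    by simp [hY0], fun x hx => ?_⟩
  have hs : |(x - x0 ε)/ε| < 3/10 := by
    rw [abs_div, abs_of_pos h, div_lt_iff₀ h]; exact hx
  obtain ⟨d1, d2, d3, eq⟩ := hY _ hs
  have dl : HasDerivAt (fun x => (x - x0 ε)/ε) (1/ε) x :=
    ((hasDerivAt_id x).sub_const _).div_const _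
  refine ⟨?_, ?_, ?_, ?_⟩
  · refine (HasDerivAt.comp x d1 dl).congr_deriv ?_
    ring
  · refine ((HasDerivAt.comp x d2 dl).div_const ε).congr_deriv ?_
    field_simp
  · exact (ContinuousAt.comp (f := fun x => (x - x0 ε)/ε) d3 dl.continuousAt).div_const _
  · obtain ⟨hx1, hx2⟩ := abs_lt.1 hx
    have hxe : x ≤ ε := by linarith
    unfold phi2 phi1
    rw [if_pos hxe, if_pos hxe]
    have ht : x/ε = (x - x0 ε)/ε + (2-√3) := by
      unfold x0; field_simp; ring
    have hpos : 0 < 1 + x/ε := by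
      have : -1 < x/ε := by rw [lt_div_iff₀ h]; linarith
      linarith
    simp only
    generalize (x - x0 ε)/ε = s at *
    set t := x/ε
    have q := s3sq
    have k1 : 1 - 4*t + t^2 = s^2 - 2*√3*s := by rw [ht]; linear_combination q
    have k2 : (1+t)^3 = s^3 + 3*(3-√3)*s^2 + 3*(12-6*√3)*s + (54-30*√3) := by
      rw [ht]; linear_combination (3*s+9-√3) * q
    have k3 : (180 - 108*√3)*s + (162-102*√3)*s^2 + (54-36*√3)*s^3 + (9-5*√3)*s^4 + 1*s^5
        = (1 - 4*t + t^2) * (1+t)^3 := by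
      rw [k1, k2]; linear_combination (-(60*s+36*s^2+6*s^3))*q
    have k4 : -(72*ε*(√3-1)) + 72*ε*s = -72*ε*(1-t) := by rw [ht]; ring
    have k5 : 12*lam*ε^2*(54-30*√3) + 36*lam*ε^2*(12-6*√3)*s + 36*lam*ε^2*(3-√3)*s^2
        + 12*lam*ε^2*s^3 = 12*lam*ε^2*(1+t)^3 := by rw [k2]; ring
    rw [k3, k4, k5] at eq
    have e := h.ne'
    have e2 := hpos.ne'
    generalize 1 - 4*t + t^2 = p at *
    generalize hT : 1 + t = T at *
    field_simp
    linear_combination eq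

lemma u_bdd {ε lam : ℝ} (h : 0 < ε) (h2 : ε ≤ 1/10) {u u' : ℝ → ℝ} (hs : IsSLSol ε lam u u')
    (hl : Tendsto (fun x => pfun ε x * u' x) (𝓝[>] (x0 ε)) (𝓝 0)) :
    Tendsto (fun x => pfun ε x * u x) (𝓝[>] (x0 ε)) (𝓝 0) := by
  have hb := x0_bds h
  obtain ⟨c, hc, hlow⟩ := pfun_lower h
  set a := (4 + 2*√3) * ε with ha
  have ha1 : a < 1 := by
    have : a ≤ (4+2*√3) * (1/10) := mul_le_mul_of_nonneg_left h2 (by positivity)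
    linarith [s3hi]
  have ev : ∀ᶠ x in 𝓝[>] (x0 ε), |pfun ε x * u' x| < 1 := by
    have := hl.abs
    rw [abs_zero] at this
    exact this.eventually_lt_const one_pos
  obtain ⟨m, hm, hsub⟩ := mem_nhdsGT_iff_exists_Ioo_subset.1 ev
  have hm' : x0 ε < m := hm
  obtain ⟨b, hb1, hb2⟩ := exists_between (lt_min hm' (by linarith : x0 ε < ε))
  have hbm : b < m := hb2.trans_le (min_le_left _ _)
  have hbe : b < ε := hb2.trans_le (min_le_right _ _)
  let G : ℝ → ℝ := fun x => c⁻¹ * ((x - x0 ε)^(1-a) / (1-a))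
  have hG : ∀ x, x0 ε < x → HasDerivAt G (c⁻¹ * (x - x0 ε)^(-a)) x := by
    intro x hx
    have d := (((hasDerivAt_id x).sub_const (x0 ε)).rpow_const (p := 1-a) (Or.inl (by
      simp only [id]; linarith))).div_const (1-a)
    refine (d.const_mul c⁻¹).congr_deriv ?_
    have : 1 - a ≠ 0 := by linarith
    simp only [id]
    rw [show 1 - a - 1 = -a by ring]
    field_simp
  have hbd : ∀ x, x0 ε < x → x ≤ b → |u' x| ≤ c⁻¹ * (x - x0 ε)^(-a) := by
    intro x h1 h3
    have hin : x ∈ Ioo (x0 ε) (1 - x0 ε) := ⟨h1, by linarith⟩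
    have pp := pfun_pos h h2 hin
    have k1 : |pfun ε x * u' x| < 1 := hsub ⟨h1, by linarith⟩
    have k2 := hlow x h1 (by linarith)
    rw [abs_mul, abs_of_pos pp] at k1
    have hr : 0 < (x - x0 ε)^a := Real.rpow_pos_of_pos (by linarith) _
    rw [Real.rpow_neg (by linarith), ← mul_inv, ← one_div, le_div_iff₀ (by positivity)]
    have := mul_le_mul_of_nonneg_right k2 (abs_nonneg (u' x))
    linarith
  have hu : ∀ x, x0 ε < x → x ≤ b → |u x| ≤ |u b| + G b := by
    intro x h1 h3
    have hin : ∀ z ∈ Icc x b, z ∈ Ioo (x0 ε) (1 - x0 ε) := fun z hz =>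
      ⟨by linarith [hz.1], by linarith [hz.2]⟩
    have hGx : 0 ≤ G x := by
      have : 0 ≤ (x - x0 ε)^(1-a) := Real.rpow_nonneg (by linarith) _
      have : 0 < 1 - a := by linarith
      simp only [G]; positivity
    have dz : ∀ z ∈ Icc x b, HasDerivAt (fun z => G z + u z) (c⁻¹ * (z - x0 ε)^(-a) + u' z) z :=
      fun z hz => (hG z (hin z hz).1).add (hs z (hin z hz)).1
    have dz2 : ∀ z ∈ Icc x b, HasDerivAt (fun z => G z - u z) (c⁻¹ * (z - x0 ε)^(-a) - u' z) z :=
      fun z hz => (hG z (hin z hz).1).sub (hs z (hin z hz)).1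
    have m1 : MonotoneOn (fun z => G z + u z) (Icc x b) := by
      refine monotoneOn_of_hasDerivWithinAt_nonneg (convex_Icc x b)
        (fun z hz => (dz z hz).continuousAt.continuousWithinAt)
        (fun z hz => (dz z (interior_subset hz)).hasDerivWithinAt) (fun z hz => ?_)
      have hz' := interior_subset hz
      have := (abs_le.1 (hbd z (hin z hz').1 hz'.2)).1
      linarith
    have m2 : MonotoneOn (fun z => G z - u z) (Icc x b) := by
      refine monotoneOn_of_hasDerivWithinAt_nonneg (convex_Icc x b)
        (fun z hz => (dz2 z hz).continuousAt.continuousWithinAt)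
        (fun z hz => (dz2 z (interior_subset hz)).hasDerivWithinAt) (fun z hz => ?_)
      have hz' := interior_subset hz
      have := (abs_le.1 (hbd z (hin z hz').1 hz'.2)).2
      linarith
    have i1 : G x + u x ≤ G b + u b := m1 ⟨le_rfl, h3⟩ ⟨h3, le_rfl⟩ h3
    have i2 : G x - u x ≤ G b - u b := m2 ⟨le_rfl, h3⟩ ⟨h3, le_rfl⟩ h3
    rw [abs_le]
    constructor
    · linarith [neg_abs_le (u b)]
    · linarith [le_abs_self (u b)]
  have hp := (pfun_tendsto h).abs.mul_const (|u b| + G b)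
  rw [abs_zero, zero_mul] at hp
  refine squeeze_zero_norm' ?_ hp
  filter_upwards [Ioo_mem_nhdsGT hb1] with x hx
  rw [Real.norm_eq_abs, abs_mul]
  exact mul_le_mul_of_nonneg_left (hu x hx.1 hx.2.le) (abs_nonneg _)

lemma left_ext {ε lam : ℝ} (h : 0 < ε) (h2 : ε ≤ 1/10) {u u' : ℝ → ℝ} (hs : IsSLSol ε lam u u')
    (hl : Tendsto (fun x => pfun ε x * u' x) (𝓝[>] (x0 ε)) (𝓝 0)) :
    ∃ y y1 y2 : ℝ → ℝ, LSol ε lam y y1 y2 ∧ ∃ m, x0 ε < m ∧ m < x0 ε + 3/10*ε ∧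
      ∀ x ∈ Ioo (x0 ε) m, u x = y x := by
  have hb := x0_bds h
  obtain ⟨y, y1, y2, hy0, hy⟩ := sol_exists h lam
  have hx0 := hy (x0 ε) (by rw [sub_self, abs_zero]; positivity)
  have ub := u_bdd h h2 hs hl
  let W : ℝ → ℝ := fun x => (pfun ε x * u' x) * y x - u x * (pfun ε x * y1 x)
  have abs_in : ∀ x ∈ Ioo (x0 ε) (x0 ε + 3/10*ε), |x - x0 ε| < 3/10*ε := fun x hx =>
    abs_lt.2 ⟨by linarith [hx.1], by linarith [hx.2]⟩
  have inn : ∀ x ∈ Ioo (x0 ε) (x0 ε + 3/10*ε), x ∈ Ioo (x0 ε) (1 - x0 ε) := fun x hx =>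
    ⟨hx.1, by linarith [hx.2]⟩
  have hW : ∀ x ∈ Ioo (x0 ε) (x0 ε + 3/10*ε), HasDerivAt W 0 x := by
    intro x hx
    obtain ⟨e1, e2, e3, e4⟩ := hy x (abs_in x hx)
    obtain ⟨f1, f2⟩ := hs x (inn x hx)
    have fp := pfun_deriv h h2 (inn x hx)
    refine ((f2.mul e1).sub (f1.mul (fp.mul e2))).congr_deriv ?_
    have n := (phi2_neg h h2 (inn x hx)).ne
    unfold wfun
    simp only [Pi.mul_apply]
    have : y2 x = (lam * y x - phi1 ε x * y1 x) / phi2 ε x := by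
      rw [eq_div_iff n]; linear_combination e4
    rw [this]
    field_simp
    ring
  have W0 : Tendsto W (𝓝[>] (x0 ε)) (𝓝 0) := by
    have t1 := hl.mul (hx0.1.continuousAt.tendsto.mono_left (nhdsWithin_le_nhds (s := Ioi (x0 ε))))
    have t2 := ub.mul (hx0.2.1.continuousAt.tendsto.mono_left (nhdsWithin_le_nhds (s := Ioi (x0 ε))))
    have t3 := t1.sub t2
    simp only [zero_mul, sub_zero] at t3
    refine t3.congr (fun x => ?_)
    simp only [W]; ring
  have Wz : ∀ x ∈ Ioo (x0 ε) (x0 ε + 3/10*ε), W x = 0 := by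
    intro x hx
    have hc : ∀ z ∈ Ioo (x0 ε) (x0 ε + 3/10*ε), W z = W x := fun z hz =>
      isOpen_Ioo.is_const_of_deriv_eq_zero isPreconnected_Ioo
        (fun w hw => (hW w hw).differentiableAt.differentiableWithinAt)
        (fun w hw => (hW w hw).deriv) hz hx
    have : Tendsto W (𝓝[>] (x0 ε)) (𝓝 (W x)) := by
      refine tendsto_const_nhds.congr' ?_
      filter_upwards [Ioo_mem_nhdsGT (by linarith : x0 ε < x0 ε + 3/10*ε)] with z hz
      exact (hc z hz).symm
    exact tendsto_nhds_unique this W0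
  have ynz : ∀ᶠ x in 𝓝[>] (x0 ε), y x ≠ 0 :=
    (hx0.1.continuousAt.eventually_ne (by rw [hy0]; exact one_ne_zero)).filter_mono nhdsWithin_le_nhds
  obtain ⟨m0, hm0, hsub⟩ := mem_nhdsGT_iff_exists_Ioo_subset.1 ynz
  have hm0' : x0 ε < m0 := hm0
  obtain ⟨m, hm1, hm2⟩ := exists_between (lt_min hm0' (by linarith : x0 ε < x0 ε + 3/10*ε))
  have hma : m < m0 := hm2.trans_le (min_le_left _ _)
  have hmb : m < x0 ε + 3/10*ε := hm2.trans_le (min_le_right _ _)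
  have hq : ∀ x ∈ Ioo (x0 ε) m, HasDerivAt (fun x => u x / y x) 0 x := by
    intro x hx
    have hx' : x ∈ Ioo (x0 ε) (x0 ε + 3/10*ε) := ⟨hx.1, hx.2.trans hmb⟩
    have hyn : y x ≠ 0 := hsub ⟨hx.1, hx.2.trans hma⟩
    refine ((hs x (inn x hx')).1.div (hy x (abs_in x hx')).1 hyn).congr_deriv ?_
    have w := Wz x hx'
    have pp := (pfun_pos h h2 (inn x hx')).ne'
    have : u' x * y x - u x * y1 x = 0 := by
      apply mul_left_cancel₀ pp
      simp only [W] at w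
      linear_combination w
    rw [this, zero_div]
  obtain ⟨z, hz1, hz2⟩ := exists_between hm1
  set k := u z / y z with hk
  refine ⟨fun x => k * y x, fun x => k * y1 x, fun x => k * y2 x, ?_, m, hm1, hmb, ?_⟩
  · intro x hx
    obtain ⟨e1, e2, e3, e4⟩ := hy x hx
    refine ⟨e1.const_mul k, e2.const_mul k, continuousAt_const.mul e3, ?_⟩
    linear_combination k * e4
  · intro x hx
    have hyn : y x ≠ 0 := hsub ⟨hx.1, hx.2.trans hma⟩
    have hc : u x / y x = u z / y z :=
      isOpen_Ioo.is_const_of_deriv_eq_zero (f := fun x => u x / y x) isPreconnected_Ioo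
        (fun w hw => (hq w hw).differentiableAt.differentiableWithinAt)
        (fun w hw => (hq w hw).deriv) hx ⟨hz1, hz2⟩
    show u x = k * y x
    rw [hk, ← hc, div_mul_cancel₀ _ hyn]

lemma sl_refl {ε lam : ℝ} (h : 0 < ε) (h2 : ε ≤ 1/10) {u u' : ℝ → ℝ} (hs : IsSLSol ε lam u u') :
    IsSLSol ε lam (fun x => u (1-x)) (fun x => -u' (1-x)) := by
  intro x hx
  obtain ⟨f1, f2⟩ := hs (1-x) ⟨by linarith [hx.2], by linarith [hx.1]⟩
  have dl : HasDerivAt (fun x : ℝ => 1 - x) (-1) x := by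
    simpa using (hasDerivAt_id x).const_sub 1
  refine ⟨(HasDerivAt.comp x f1 dl).congr_deriv (by ring), ?_⟩
  have d := (HasDerivAt.comp x f2 dl).neg
  have e : (fun y => pfun ε y * -u' (1-y)) =
      -((fun y => pfun ε y * u' y) ∘ fun x => 1 - x) := by
    funext y
    simp only [Pi.neg_apply, Function.comp]
    rw [pfun_symm h h2]; ring
  rw [e]
  refine d.congr_deriv ?_
  unfold wfun
  rw [pfun_symm h h2, phi2_symm h h2]; ring

lemma right_ext {ε lam : ℝ} (h : 0 < ε) (h2 : ε ≤ 1/10) {u u' : ℝ → ℝ} (hs : IsSLSol ε lam u u')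
    (hl : Tendsto (fun x => pfun ε x * u' x) (𝓝[<] (1 - x0 ε)) (𝓝 0)) :
    ∃ y y1 y2 : ℝ → ℝ, LSol ε lam y y1 y2 ∧ ∃ m, x0 ε < m ∧ m < x0 ε + 3/10*ε ∧
      ∀ x ∈ Ioo (x0 ε) m, u (1-x) = y x := by
  refine left_ext h h2 (sl_refl h h2 hs) ?_
  have t : Tendsto (fun x : ℝ => 1 - x) (𝓝[>] (x0 ε)) (𝓝[<] (1 - x0 ε)) := by
    refine tendsto_nhdsWithin_iff.2 ⟨?_, ?_⟩
    · exact (Continuous.tendsto (by fun_prop) _).mono_left nhdsWithin_le_nhds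
    · filter_upwards [self_mem_nhdsWithin] with x hx
      have : x0 ε < x := hx
      show 1 - x < 1 - x0 ε
      linarith
  have := (hl.comp t).neg
  rw [neg_zero] at this
  refine this.congr (fun x => ?_)
  simp only [Function.comp]
  rw [pfun_symm h h2]; ring

lemma mid_deriv {ε lam : ℝ} (h : 0 < ε) (h2 : ε ≤ 1/10) {u u' : ℝ → ℝ} (hs : IsSLSol ε lam u u')
    {x : ℝ} (hx : x ∈ Ioo (x0 ε) (1 - x0 ε)) :
    HasDerivAt u' ((lam * u x - phi1 ε x * u' x)/phi2 ε x) x := by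
  obtain ⟨f1, f2⟩ := hs x hx
  have pp := (pfun_pos h h2 hx).ne'
  have n := (phi2_neg h h2 hx).ne
  have d := f2.div (pfun_deriv h h2 hx) pp
  have ee : u' =ᶠ[𝓝 x] ((fun y => pfun ε y * u' y) / pfun ε) := by
    filter_upwards [isOpen_Ioo.mem_nhds hx] with y hy
    have := (pfun_pos h h2 hy).ne'
    simp only [Pi.div_apply]
    field_simp
  refine (d.congr_of_eventuallyEq ee).congr_deriv ?_
  unfold wfun
  field_simp


lemma uniq1 {f g f' g' : ℝ → ℝ} {a b : ℝ} (he : ∀ x ∈ Ioo a b, f x = g x)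
    (hf : ∀ x ∈ Ioo a b, HasDerivAt f (f' x) x) (hg : ∀ x ∈ Ioo a b, HasDerivAt g (g' x) x) :
    ∀ x ∈ Ioo a b, f' x = g' x := by
  intro x hx
  refine (hf x hx).unique ((hg x hx).congr_of_eventuallyEq ?_)
  filter_upwards [isOpen_Ioo.mem_nhds hx] with y hy using he y hy

lemma refl_sol {ε lam : ℝ} (h : 0 < ε) (h2 : ε ≤ 1/10) {y y1 y2 : ℝ → ℝ} (hy : LSol ε lam y y1 y2)
    {x : ℝ} (hx : |1 - x - x0 ε| < 3/10*ε) :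
    HasDerivAt (fun x => y (1-x)) (-y1 (1-x)) x ∧ HasDerivAt (fun x => -y1 (1-x)) (y2 (1-x)) x ∧
    ContinuousAt (fun x => y2 (1-x)) x ∧
    phi2 ε x * y2 (1-x) + phi1 ε x * (-y1 (1-x)) = lam * y (1-x) := by
  obtain ⟨e1, e2, e3, e4⟩ := hy (1-x) hx
  have dl : HasDerivAt (fun x : ℝ => 1 - x) (-1) x := by
    simpa using (hasDerivAt_id x).const_sub 1
  refine ⟨(HasDerivAt.comp x e1 dl).congr_deriv (by ring),
    (HasDerivAt.comp x e2 dl).neg.congr_deriv (by ring),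
    ContinuousAt.comp (f := fun x : ℝ => 1 - x) e3 dl.continuousAt, ?_⟩
  rw [phi1_symm h h2, phi2_symm h h2] at e4
  linear_combination e4

noncomputable def glue (ε : ℝ) (f g k : ℝ → ℝ) (x : ℝ) : ℝ :=
  if x ≤ x0 ε then f x else if x < 1 - x0 ε then g x else k x

lemma glue_l {ε m : ℝ} {f g k : ℝ → ℝ} (hm : m ≤ 1 - x0 ε) (he : ∀ x ∈ Ioo (x0 ε) m, g x = f x) :
    ∀ x < m, glue ε f g k x = f x := by
  intro x hx
  unfold glue
  split_ifs with h1 h2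
  · rfl
  · exact he x ⟨by linarith, hx⟩
  · linarith

lemma glue_m {ε : ℝ} {f g k : ℝ → ℝ} : ∀ x ∈ Ioo (x0 ε) (1 - x0 ε), glue ε f g k x = g x := by
  intro x hx
  unfold glue
  rw [if_neg (by linarith [hx.1]), if_pos hx.2]

lemma glue_r {ε m : ℝ} {f g k : ℝ → ℝ} (hm : x0 ε ≤ m)
    (he : ∀ x ∈ Ioo m (1 - x0 ε), g x = k x) :
    ∀ x, m < x → glue ε f g k x = k x := by
  intro x hx
  unfold glue
  split_ifs with h1 h2
  · linarith
  · exact he x ⟨hx, h2⟩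
  · rfl

lemma fwd {ε lam : ℝ} (h : 0 < ε) (h2 : ε ≤ 1/10) {u u' : ℝ → ℝ} (hs : IsSLSol ε lam u u')
    (hl : Tendsto (fun x => pfun ε x * u' x) (𝓝[>] (x0 ε)) (𝓝 0))
    (hr : Tendsto (fun x => pfun ε x * u' x) (𝓝[<] (1 - x0 ε)) (𝓝 0)) :
    ∃ v v' v'' : ℝ → ℝ,
          (∀ x ∈ Icc (0:ℝ) 1, HasDerivAt v (v' x) x) ∧
          (∀ x ∈ Icc (0:ℝ) 1, HasDerivAt v' (v'' x) x) ∧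
          ContinuousOn v'' (Icc 0 1) ∧
          (∀ x ∈ Ioo (x0 ε) (1 - x0 ε), v x = u x) ∧
          (∀ x ∈ Icc (0:ℝ) 1, phi2 ε x * v'' x + phi1 ε x * v' x = lam * v x) := by
  have hb := x0_bds h
  obtain ⟨y, y1, y2, hy, m, hm1, hm2, hym⟩ := left_ext h h2 hs hl
  obtain ⟨z, z1, z2, hz, n, hn1, hn2, hzn⟩ := right_ext h h2 hs hr
  let u2 : ℝ → ℝ := fun x => (lam * u x - phi1 ε x * u' x)/phi2 ε x
  have iu : ∀ x ∈ Ioo (x0 ε) m, x ∈ Ioo (x0 ε) (1 - x0 ε) := fun x hx =>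
    ⟨hx.1, by linarith [hx.2]⟩
  have iy : ∀ x ∈ Ioo (x0 ε) m, |x - x0 ε| < 3/10*ε := fun x hx =>
    abs_lt.2 ⟨by linarith [hx.1], by linarith [hx.2]⟩
  have ju : ∀ x ∈ Ioo (1-n) (1 - x0 ε), x ∈ Ioo (x0 ε) (1 - x0 ε) := fun x hx =>
    ⟨by linarith [hx.1], hx.2⟩
  have jz : ∀ x ∈ Ioo (1-n) (1 - x0 ε), |1 - x - x0 ε| < 3/10*ε := fun x hx =>
    abs_lt.2 ⟨by linarith [hx.2], by linarith [hx.1]⟩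
  have hz0 : ∀ x ∈ Ioo (1-n) (1 - x0 ε), u x = z (1-x) := by
    intro x hx
    have := hzn (1-x) ⟨by linarith [hx.2], by linarith [hx.1]⟩
    rwa [sub_sub_cancel] at this
  have a1 := uniq1 hym (fun x hx => (hs x (iu x hx)).1) (fun x hx => (hy x (iy x hx)).1)
  have a2 := uniq1 (f' := u2) a1 (fun x hx => mid_deriv h h2 hs (iu x hx))
    (fun x hx => (hy x (iy x hx)).2.1)
  have b1 := uniq1 (g := fun x => z (1-x)) (g' := fun x => -z1 (1-x)) hz0
    (fun x hx => (hs x (ju x hx)).1) (fun x hx => (refl_sol h h2 hz (jz x hx)).1)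
  have b2 := uniq1 (f' := u2) (g := fun x => -z1 (1-x)) (g' := fun x => z2 (1-x)) b1
    (fun x hx => mid_deriv h h2 hs (ju x hx)) (fun x hx => (refl_sol h h2 hz (jz x hx)).2.1)
  let v := glue ε y u (fun x => z (1-x))
  let v' := glue ε y1 u' (fun x => -z1 (1-x))
  let v'' := glue ε y2 u2 (fun x => z2 (1-x))
  have key : ∀ x ∈ Icc (0:ℝ) 1, ∃ f f1 f2 : ℝ → ℝ, v =ᶠ[𝓝 x] f ∧ v' =ᶠ[𝓝 x] f1 ∧ v'' =ᶠ[𝓝 x] f2 ∧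
      HasDerivAt f (f1 x) x ∧ HasDerivAt f1 (f2 x) x ∧ ContinuousAt f2 x ∧
      phi2 ε x * f2 x + phi1 ε x * f1 x = lam * f x := by
    intro x hx
    by_cases c1 : x ≤ x0 ε
    · have hI : Iio m ∈ 𝓝 x := Iio_mem_nhds (by linarith)
      refine ⟨y, y1, y2, ?_, ?_, ?_, hy x (abs_lt.2 ⟨by linarith [hx.1], by linarith⟩)⟩
      · filter_upwards [hI] with w hw using glue_l (by linarith) hym w hw
      · filter_upwards [hI] with w hw using glue_l (by linarith) a1 w hw
      · filter_upwards [hI] with w hw using glue_l (by linarith) a2 w hw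
    · by_cases c2 : x < 1 - x0 ε
      · have hxI : x ∈ Ioo (x0 ε) (1 - x0 ε) := ⟨by linarith, c2⟩
        have hI := isOpen_Ioo.mem_nhds hxI
        have nn := (phi2_neg h h2 hxI).ne
        have hx01 : x ∈ Ioo (0:ℝ) 1 := ⟨by linarith, by linarith⟩
        have d1 := mid_deriv h h2 hs hxI
        refine ⟨u, u', u2, ?_, ?_, ?_, (hs x hxI).1, d1, ?_, ?_⟩
        · filter_upwards [hI] with w hw using glue_m w hw
        · filter_upwards [hI] with w hw using glue_m w hw
        · filter_upwards [hI] with w hw using glue_m w hw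
        · exact ((continuousAt_const.mul (hs x hxI).1.continuousAt).sub
            ((phi1_cont h h2 hx01).mul d1.continuousAt)).div (phi2_cont h h2 hx01) nn
        · simp only [u2]
          field_simp
          ring
      · have hI : Ioi (1-n) ∈ 𝓝 x := Ioi_mem_nhds (by linarith)
        refine ⟨fun x => z (1-x), fun x => -z1 (1-x), fun x => z2 (1-x), ?_, ?_, ?_,
          refl_sol h h2 hz (abs_lt.2 ⟨by linarith [hx.2], by linarith⟩)⟩
        · filter_upwards [hI] with w hw using glue_r (by linarith) hz0 w hw
        · filter_upwards [hI] with w hw using glue_r (by linarith) b1 w hw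
        · filter_upwards [hI] with w hw using glue_r (by linarith) b2 w hw
  refine ⟨v, v', v'', fun x hx => ?_, fun x hx => ?_, fun x hx => ?_, fun x hx => glue_m x hx,
    fun x hx => ?_⟩
  all_goals obtain ⟨f, f1, f2, k0, k1, k2, d0, d1, c2, e⟩ := key x hx
  · rw [k1.eq_of_nhds]; exact d0.congr_of_eventuallyEq k0
  · rw [k2.eq_of_nhds]; exact d1.congr_of_eventuallyEq k1
  · exact (c2.congr k2.symm).continuousWithinAt
  · rw [k0.eq_of_nhds, k1.eq_of_nhds, k2.eq_of_nhds]; exact e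

lemma pfun_tendsto_r {ε : ℝ} (h : 0 < ε) (h2 : ε ≤ 1/10) :
    Tendsto (pfun ε) (𝓝[<] (1 - x0 ε)) (𝓝 0) := by
  have t : Tendsto (fun x : ℝ => 1 - x) (𝓝[<] (1 - x0 ε)) (𝓝[>] (x0 ε)) := by
    refine tendsto_nhdsWithin_iff.2 ⟨?_, ?_⟩
    · have : Tendsto (fun x : ℝ => 1 - x) (𝓝 (1 - x0 ε)) (𝓝 (1 - (1 - x0 ε))) :=
        Continuous.tendsto (by fun_prop) _
      rw [sub_sub_cancel] at this
      exact this.mono_left nhdsWithin_le_nhds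
    · filter_upwards [self_mem_nhdsWithin] with x hx
      have : x < 1 - x0 ε := hx
      show x0 ε < 1 - x
      linarith
  exact ((pfun_tendsto h).comp t).congr (fun x => pfun_symm h h2 x)

theorem stmt7 :
    ∃ ε₀ > (0:ℝ), ∀ ε : ℝ, 0 < ε → ε ≤ ε₀ → ∀ lam : ℝ, ∀ u u' : ℝ → ℝ,
      IsSLSol ε lam u u' →
      ((Tendsto (fun x => pfun ε x * u' x) (𝓝[>] (x0 ε)) (𝓝 0) ∧
        Tendsto (fun x => pfun ε x * u' x) (𝓝[<] (1 - x0 ε)) (𝓝 0)) ↔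
        ∃ v v' v'' : ℝ → ℝ,
          (∀ x ∈ Icc (0:ℝ) 1, HasDerivAt v (v' x) x) ∧
          (∀ x ∈ Icc (0:ℝ) 1, HasDerivAt v' (v'' x) x) ∧
          ContinuousOn v'' (Icc 0 1) ∧
          (∀ x ∈ Ioo (x0 ε) (1 - x0 ε), v x = u x) ∧
          (∀ x ∈ Icc (0:ℝ) 1, phi2 ε x * v'' x + phi1 ε x * v' x = lam * v x)) := by
  refine ⟨1/10, by norm_num, fun ε h h2 lam u u' hs => ⟨fun ⟨hl, hr⟩ => fwd h h2 hs hl hr, ?_⟩⟩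
  rintro ⟨v, v', v'', d1, d2, -, he, -⟩
  have hb := x0_bds h
  have hu := uniq1 he (fun x hx => d1 x ⟨by linarith [hx.1], by linarith [hx.2]⟩)
    (fun x hx => (hs x hx).1)
  constructor
  · have t := (pfun_tendsto h).mul ((d2 (x0 ε) ⟨by linarith, by linarith⟩).continuousAt.tendsto.mono_left
      (nhdsWithin_le_nhds (s := Ioi (x0 ε))))
    rw [zero_mul] at t
    refine t.congr' ?_
    filter_upwards [Ioo_mem_nhdsGT (by linarith : x0 ε < 1 - x0 ε)] with x hx
    rw [hu x hx]
  · have t := (pfun_tendsto_r h h2).mul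
      ((d2 (1 - x0 ε) ⟨by linarith, by linarith⟩).continuousAt.tendsto.mono_left
      (nhdsWithin_le_nhds (s := Iio (1 - x0 ε))))
    rw [zero_mul] at t
    refine t.congr' ?_
    filter_upwards [Ioo_mem_nhdsLT (by linarith : x0 ε < 1 - x0 ε)] with x hx
    rw [hu x hx]
end

section
/- Let ε₁ > 0 and suppose that for each ε ∈ (0,ε₁] there are λ(ε) ∈ [0,∞) and a nonzero u_ε ∈ C²([0,1]) with φ₂u_ε'' + φ₁u_ε' = λ(ε)u_ε on [0,1], and suppose lim_{ε→0} λ(ε)·ε² = 0. Then there exist constants C > 0 and ε₀ ∈ (0,ε₁] such that for all 0 < ε ≤ ε₀, writing λ = λ(ε): |sin(√(6λ))·((21 − 12√3)λ − 6) + 2√(6λ)·(3 − 2√3)·cos(√(6λ))| ≤ C·ε·λ^(3/2). -/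
open Real Set Filter Topology MeasureTheory

lemma damp1 (a b K : ℝ) (hab : a ≤ b) (hK : 0 ≤ K) (z z' : ℝ → ℝ) (hz : z a = 0)
    (hd : ∀ x ∈ Icc a b, HasDerivAt z (z' x) x)
    (h : ∀ x ∈ Ioc a b, 0 < z x → z' x ≤ K) : z b ≤ K * (b - a) := by
  have key : ∀ δ > 0, z b ≤ δ + (K + δ) * (b - a) := by
    intro δ hδ
    have hB : ∀ x, HasDerivAt (fun x => δ + (K + δ) * (x - a)) (K + δ) x := by
      intro x
      have := (((hasDerivAt_id x).sub_const a).const_mul (K + δ)).const_add δ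
      simpa using this
    have := image_le_of_deriv_right_lt_deriv_boundary (f := z) (f' := z') (a := a) (b := b)
      (B := fun x => δ + (K + δ) * (x - a)) (B' := fun _ => K + δ)
      (fun x hx => (hd x hx).continuousAt.continuousWithinAt)
      (fun x hx => (hd x ⟨hx.1, hx.2.le⟩).hasDerivWithinAt)
      (by simp [hz, hδ.le]) hB
      (by
        intro x hx hxe
        have h0 : 0 ≤ (K + δ) * (x - a) := mul_nonneg (by linarith) (by linarith [hx.1])
        have hzp : 0 < z x := by rw [hxe]; linarith
        have hxa : a < x := by
          rcases hx.1.lt_or_eq with h1 | h1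
          · exact h1
          · rw [← h1, hz] at hzp; exact absurd hzp (lt_irrefl _)
        linarith [h x ⟨hxa, hx.2.le⟩ hzp])
    exact this (right_mem_Icc.2 hab)
  by_contra hc
  push Not at hc
  set g := z b - K * (b - a) with hg
  have hg0 : 0 < g := by linarith
  have h1 : 0 < 1 + (b - a) := by linarith
  have := key (g / (2 * (1 + (b - a)))) (by positivity)
  have h2 : g / (2 * (1 + (b - a))) * (1 + (b - a)) = g / 2 := by field_simp
  nlinarith

lemma damp (a b K : ℝ) (hab : a ≤ b) (hK : 0 ≤ K) (z z' : ℝ → ℝ) (hz : z a = 0)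
    (hd : ∀ x ∈ Icc a b, HasDerivAt z (z' x) x)
    (h : ∀ x ∈ Ioc a b, z x * z' x ≤ K * |z x|) : |z b| ≤ K * (b - a) := by
  rw [abs_le]
  constructor
  · have := damp1 a b K hab hK (fun x => - z x) (fun x => - z' x) (by simp [hz])
      (fun x hx => (hd x hx).neg) (by
        intro x hx hx0
        have h1 := h x hx
        have hx0 : 0 < - z x := hx0
        rw [abs_of_neg (by linarith)] at h1
        by_contra hc
        push Not at hc
        nlinarith)
    linarith
  · refine damp1 a b K hab hK z z' hz hd ?_
    intro x hx hx0
    have h1 := h x hx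
    rw [abs_of_pos hx0] at h1
    by_contra hc
    push Not at hc
    nlinarith

lemma phi1_bound (r t : ℝ) (hr : r ^ 2 = 3) (h1 : 1.7 < r) (h2 : r < 1.8) (ht : 0 ≤ t) (ht1 : t ≤ 1) :
    |1 + (2 * r - 3) * (-6 * (1 - t) * ((1 + t)^3)⁻¹)| ≤ 15 * |t - (2 - r)| := by
  have hp : 1 ≤ (1 + t)^3 := one_le_pow₀ (by linarith)
  have e : 1 + (2 * r - 3) * (-6 * (1 - t) * ((1 + t)^3)⁻¹) =
      (t - (2 - r)) * ((1+t)^2 + (1+t)*(3-r) + (3-r)^2 + 6 * (2*r-3)) / (1+t)^3 := by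
    field_simp
    have : r^3 = 3 * r := by rw [pow_succ, hr]
    ring_nf
    rw [this, hr]
    ring
  rw [e, abs_div, abs_mul, abs_of_pos (by linarith : 0 < (1+t)^3), div_le_iff₀ (by linarith)]
  have hb : |(1+t)^2 + (1+t)*(3-r) + (3-r)^2 + 6 * (2*r-3)| ≤ 15 := by
    rw [abs_le]; constructor <;> nlinarith
  have h0 := abs_nonneg (t - (2 - r))
  nlinarith [mul_le_mul_of_nonneg_left hb h0]

set_option maxHeartbeats 2000000 in
lemma left_end (r ε l : ℝ) (hr : r ^ 2 = 3) (hr1 : 1.7 < r) (hr2 : r < 1.8)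
    (hε : 0 < ε) (hε1 : ε ≤ 1/180) (hl : 0 ≤ l) (hle : l * ε^2 ≤ 1/180)
    (u u' u'' : ℝ → ℝ)
    (hu : ∀ x ∈ Icc 0 ε, HasDerivAt u (u' x) x)
    (hu' : ∀ x ∈ Icc 0 ε, HasDerivAt u' (u'' x) x)
    (heq : ∀ x ∈ Icc 0 ε, (1/12) * (1 - 4*(x/ε) + (x/ε)^2) * u'' x +
      (-6 * (1 - x/ε) * ((1 + x/ε)^3)⁻¹) * u' x = l * u x) :
    ∃ a s p : ℝ, u ε = a * s ∧ u' ε = - (a * l * p) ∧ |s - 1| ≤ 4 * ε * l ∧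
      |p - (2 * r - 3)| ≤ 360 * ε * (1 + ε * l) ∧ (a = 0 → ∀ x ∈ Icc 0 ε, u x = 0) := by
  obtain ⟨xm, hxm, hmax⟩ := isCompact_Icc.exists_isMaxOn (nonempty_Icc.2 hε.le)
    (f := fun x => |u' x|) (fun x hx => ((hu' x hx).continuousAt.abs).continuousWithinAt)
  set M := |u' xm| with hM
  have hMx : ∀ x ∈ Icc 0 ε, |u' x| ≤ M := fun x hx => hmax hx
  have hM0 : 0 ≤ M := abs_nonneg _
  set y := (2 - r) * ε with hy
  have hyI : y ∈ Icc 0 ε := ⟨by rw [hy]; exact mul_nonneg (by linarith) hε.le, by rw [hy]; nlinarith⟩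
  set a := u y with ha
  set k := 2 * r - 3 with hk
  have hlip : ∀ x ∈ Icc 0 ε, |u x - a| ≤ M * |x - y| := by
    intro x hx
    have := (convex_Icc (0:ℝ) ε).norm_image_sub_le_of_norm_hasDerivWithin_le (f := u) (f' := u')
      (C := M) (fun x hx => (hu x hx).hasDerivWithinAt) (fun x hx => hMx x hx) hyI hx
    simpa [Real.norm_eq_abs] using this
  have hyε : y / ε = 2 - r := by rw [hy]; field_simp
  -- value at y
  have hz0 : u' y + k * l * a = 0 := by
    have h := heq y hyI
    have hb := phi1_bound r (2 - r) hr hr1 hr2 (by linarith) (by linarith)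
    rw [hyε] at h
    rw [sub_self, abs_zero, mul_zero] at hb
    have hb := abs_nonpos_iff.1 hb
    have hq : 1 - 4 * (2 - r) + (2 - r)^2 = 0 := by nlinarith
    rw [hq] at h
    rw [← ha] at h
    linear_combination (-k) * h + (u' y) * hb
  set K := 6 * l * (M * ε + 15 * |a|) with hK
  have hK0 : 0 ≤ K := by positivity
  -- pointwise claim
  have claim : ∀ x ∈ Icc 0 ε, ∀ z, z = u' x + k * l * a →
      -(K / 6 * |x / ε - (2 - r)| * |z|) ≤ ((2 - r) - x / ε) * ((2 + r) - x/ε) / 12 * (u'' x * z) := by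
    intro x hx z hz
    set t := x / ε with ht
    have ht0 : 0 ≤ t := div_nonneg hx.1 hε.le
    have ht1 : t ≤ 1 := (div_le_one hε).2 hx.2
    have hb := phi1_bound r t hr hr1 hr2 ht0 ht1
    have h := heq x hx
    rw [← ht] at h
    set f := -6 * (1 - t) * ((1 + t)^3)⁻¹ with hf
    have hf0 : f ≤ 0 := by
      have : 0 ≤ (1 - t) * ((1 + t)^3)⁻¹ := mul_nonneg (by linarith) (by positivity)
      rw [hf]; linarith
    have hxy : |x - y| = ε * |t - (2 - r)| := by
      have : x - y = ε * (t - (2 - r)) := by rw [ht, hy]; field_simp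
      rw [this, abs_mul, abs_of_pos hε]
    have hl1 := hlip x hx
    rw [hxy] at hl1
    have hR : |l * (u x - a) + l * a * (1 + k * f)| ≤ K / 6 * |t - (2 - r)| := by
      calc _ ≤ l * |u x - a| + l * |a| * |1 + k * f| := by
            refine (abs_add_le _ _).trans ?_
            rw [abs_mul, abs_mul, abs_mul, abs_of_nonneg hl]
        _ ≤ l * (M * (ε * |t - (2 - r)|)) + l * |a| * (15 * |t - (2 - r)|) := by
            gcongr
        _ = _ := by rw [hK]; ring
    have e : ((2 - r) - t) * ((2 + r) - t) / 12 * (u'' x * z) =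
        (l * (u x - a) + l * a * (1 + k * f)) * z - f * z ^ 2 := by
      rw [hz]
      linear_combination (u' x + k * l * a) * h - (u'' x) * (u' x + k * l * a) / 12 * hr
    rw [e]
    have h3 : |(l * (u x - a) + l * a * (1 + k * f)) * z| ≤ K / 6 * |t - (2 - r)| * |z| := by
      rw [abs_mul]; gcongr
    have h4 := (abs_le.1 h3).1
    nlinarith [mul_nonneg (neg_nonneg.2 hf0) (sq_nonneg z)]
  have hzb : ∀ x ∈ Icc 0 ε, |u' x + k * l * a| ≤ K * |x - y| := by
    intro x hx
    rcases le_total y x with hxy | hxy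
    · rw [abs_of_nonneg (sub_nonneg.2 hxy)]
      refine damp y x K hxy hK0 (fun x => u' x + k * l * a) u'' hz0
        (fun w hw => (hu' w ⟨hyI.1.trans hw.1, hw.2.trans hx.2⟩).add_const _) ?_
      intro w hw
      have hwI : w ∈ Icc 0 ε := ⟨hyI.1.trans hw.1.le, hw.2.trans hx.2⟩
      have hc := claim w hwI _ rfl
      set t := w / ε with ht
      have ht1 : t ≤ 1 := (div_le_one hε).2 hwI.2
      have hd : 0 < t - (2 - r) := by rw [← hyε, ht, ← sub_div]; exact div_pos (by linarith [hw.1]) hε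
      rw [abs_of_pos hd] at hc
      set z := u' w + k * l * a
      have h0 : 0 ≤ K * |z| := mul_nonneg hK0 (abs_nonneg _)
      by_contra hcon
      push Not at hcon
      have h5 : (t - (2-r)) * (((2 + r) - t) / 12 * (u'' w * z)) ≤ (t - (2-r)) * (K * |z| / 6) := by
        linarith
      have h6 := le_of_mul_le_mul_left h5 hd
      nlinarith
    · rw [abs_sub_comm, abs_of_nonneg (sub_nonneg.2 hxy)]
      have := damp 0 (y - x) K (by linarith) hK0 (fun w => u' (y - w) + k * l * a)
        (fun w => - u'' (y - w)) (by simpa using hz0)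
        (fun w hw => by
          have h1 := hu' (y - w) ⟨by linarith [hw.2, hx.1], by linarith [hw.1, hyI.2]⟩
          have h2 : HasDerivAt (fun w => y - w) (-1) w := by
            simpa using (hasDerivAt_id w).const_sub y
          have h3 := (h1.comp w h2).add_const (k * l * a)
          simpa using h3) ?_
      · simpa using this
      intro v hv
      set w := y - v with hw
      have hwI : w ∈ Icc 0 ε := ⟨by linarith [hv.2, hx.1], by linarith [hv.1, hyI.2]⟩
      have hc := claim w hwI _ rfl
      set t := w / ε with ht
      have ht1 : t ≤ 1 := (div_le_one hε).2 hwI.2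
      have hd : 0 < (2 - r) - t := by rw [← hyε, ht, ← sub_div]; exact div_pos (by linarith [hv.1]) hε
      rw [abs_sub_comm, abs_of_pos hd] at hc
      set z := u' w + k * l * a
      have h0 : 0 ≤ K * |z| := mul_nonneg hK0 (abs_nonneg _)
      by_contra hcon
      push Not at hcon
      have h5 : ((2-r) - t) * (-(K * |z| / 6)) ≤ ((2-r) - t) * (((2 + r) - t) / 12 * (u'' w * z)) := by
        linarith
      have h6 := le_of_mul_le_mul_left h5 hd
      nlinarith
  have hxyε : ∀ x ∈ Icc 0 ε, |x - y| ≤ ε := by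
    intro x hx
    rw [abs_le]; constructor <;> linarith [hx.1, hx.2, hyI.1, hyI.2]
  have hzb' : ∀ x ∈ Icc 0 ε, |u' x + k * l * a| ≤ K * ε := fun x hx =>
    (hzb x hx).trans (mul_le_mul_of_nonneg_left (hxyε x hx) hK0)
  have hMb : M ≤ 4 * l * |a| := by
    have h1 := hzb' xm hxm
    have h2 : M ≤ |u' xm + k * l * a| + |k * l * a| := by
      have := abs_sub (u' xm + k * l * a) (k * l * a)
      simpa using this
    have h3 : |k * l * a| = k * l * |a| := by
      rw [abs_mul, abs_mul, abs_of_nonneg hl, abs_of_nonneg (by rw [hk]; linarith : 0 ≤ k)]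
    have h4 : K * ε = 6 * (l * ε^2) * M + 90 * ε * (l * |a|) := by rw [hK]; ring
    have h5 : 0 ≤ l * |a| := by positivity
    have h6 : (l * ε^2) * M ≤ 1/180 * M := by gcongr
    have h7 : ε * (l * |a|) ≤ 1/180 * (l * |a|) := by gcongr
    have h8 : k * (l * |a|) ≤ 0.6 * (l * |a|) := by
      gcongr; rw [hk]; linarith
    linarith
  have hεI : ε ∈ Icc 0 ε := ⟨hε.le, le_rfl⟩
  have hA : |u ε - a| ≤ 4 * ε * l * |a| := by
    calc _ ≤ M * |ε - y| := hlip ε hεI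
      _ ≤ (4 * l * |a|) * ε := by gcongr; exact hxyε ε hεI
      _ = _ := by ring
  have hB : |u' ε + k * l * a| ≤ l * (360 * ε * (1 + ε * l) * |a|) := by
    calc _ ≤ K * ε := hzb' ε hεI
      _ ≤ (6 * l * (4 * l * |a| * ε + 15 * |a|)) * ε := by rw [hK]; gcongr
      _ = l * ((24 * (ε * l) + 90) * ε * |a|) := by ring
      _ ≤ l * ((360 * (1 + ε * l)) * ε * |a|) := by
          have : 0 ≤ ε * l := by positivity
          gcongr; linarith
      _ = _ := by ring
  by_cases ha0 : a = 0
  · have hM' : M = 0 := le_antisymm (by rw [ha0] at hMb; simpa using hMb) hM0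
    have hall : ∀ x ∈ Icc 0 ε, u x = 0 := by
      intro x hx
      have := hlip x hx
      rw [hM', ha0, zero_mul, sub_zero] at this
      exact abs_nonpos_iff.1 this
    refine ⟨0, 1, k, by rw [hall ε hεI]; ring, ?_, by simp; positivity, by simp; positivity, fun _ => hall⟩
    have := hMx ε hεI
    rw [hM'] at this
    rw [abs_nonpos_iff.1 this]; ring
  · have hap : 0 < |a| := abs_pos.2 ha0
    rcases hl.eq_or_lt with hl0 | hl0
    · refine ⟨a, u ε / a, k, by field_simp, ?_, ?_, by simp; positivity, fun h => absurd h ha0⟩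
      · rw [← hl0] at hB
        have : u' ε = 0 := by simpa using hB
        rw [this, ← hl0]; ring
      · have : u ε / a - 1 = (u ε - a) / a := by field_simp
        rw [this, abs_div, div_le_iff₀ hap]; exact hA
    · refine ⟨a, u ε / a, - u' ε / (a * l), by field_simp, by field_simp, ?_, ?_, fun h => absurd h ha0⟩
      · have : u ε / a - 1 = (u ε - a) / a := by field_simp
        rw [this, abs_div, div_le_iff₀ hap]; exact hA
      · have : - u' ε / (a * l) - k = -(u' ε + k * l * a) / (a * l) := by field_simp; ring
        rw [this, abs_div, abs_neg, abs_mul, abs_of_pos hl0, div_le_iff₀ (by positivity)]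
        linarith

lemma middle (m c d : ℝ) (hm : 0 < m) (u u' u'' : ℝ → ℝ)
    (hu : ∀ x ∈ Icc c d, HasDerivAt u (u' x) x)
    (hu' : ∀ x ∈ Icc c d, HasDerivAt u' (u'' x) x)
    (heq : ∀ x ∈ Icc c d, u'' x = - m^2 * u x) : ∀ x ∈ Icc c d,
    u x = u c * cos (m * (x - c)) + u' c / m * sin (m * (x - c)) ∧
    u' x = - (m * u c * sin (m * (x - c))) + u' c * cos (m * (x - c)) := by
  have hang : ∀ x, HasDerivAt (fun x => m * (x - c)) m x := by
    intro x
    simpa using ((hasDerivAt_id x).sub_const c).const_mul m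
  have hP : ∀ x ∈ Icc c d, HasDerivAt
      (fun x => m * u x * cos (m * (x - c)) - u' x * sin (m * (x - c))) 0 x := by
    intro x hx
    have := (((hu x hx).const_mul m).mul (hang x).cos).sub ((hu' x hx).mul (hang x).sin)
    rw [heq x hx] at this
    refine this.congr_deriv ?_
    ring
  have hQ : ∀ x ∈ Icc c d, HasDerivAt
      (fun x => m * u x * sin (m * (x - c)) + u' x * cos (m * (x - c))) 0 x := by
    intro x hx
    have := (((hu x hx).const_mul m).mul (hang x).sin).add ((hu' x hx).mul (hang x).cos)
    rw [heq x hx] at this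
    refine this.congr_deriv ?_
    ring
  have hconst : ∀ f : ℝ → ℝ, (∀ x ∈ Icc c d, HasDerivAt f 0 x) → ∀ x ∈ Icc c d, f x = f c := by
    intro f hf x hx
    exact constant_of_has_deriv_right_zero (fun x hx => (hf x hx).continuousAt.continuousWithinAt)
      (fun x hx => (hf x ⟨hx.1, hx.2.le⟩).hasDerivWithinAt) x hx
  intro x hx
  have h1 := hconst _ hP x hx
  have h2 := hconst _ hQ x hx
  simp only [sub_self, mul_zero, cos_zero, sin_zero] at h1 h2
  have h3 := sin_sq_add_cos_sq (m * (x - c))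
  constructor
  · field_simp
    linear_combination cos (m * (x - c)) * h1 + sin (m * (x - c)) * h2 - m * u x * h3
  · linear_combination - sin (m * (x - c)) * h1 + cos (m * (x - c)) * h2 - u' x * h3

set_option maxHeartbeats 2000000 in
lemma final_est (k ε l m s p s' p' S c S0 c0 : ℝ) (hk0 : 0 ≤ k) (hk : k ≤ 0.6)
    (hε : 0 < ε) (hl : 0 ≤ l) (hm : 0 < m) (hml : m^2 = 6 * l)
    (hε1 : ε ≤ 1/1000) (hle : l * ε^2 ≤ 1/1000)
    (hs : |s - 1| ≤ 4 * ε * l) (hp : |p - k| ≤ 360 * ε * (1 + ε * l))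
    (hs' : |s' - 1| ≤ 4 * ε * l) (hp' : |p' - k| ≤ 360 * ε * (1 + ε * l))
    (hS : |S| ≤ m) (hS1 : |S| ≤ 1) (hc : |c| ≤ 1) (hSS : |S0 - S| ≤ 2 * ε * m) (hcc : |c0 - c| ≤ 2 * ε * m)
    (hdet : l * p * p' * S - 6 * s * s' * S - m * c * (p * s' + p' * s) = 0) :
    |S0 * (k^2 * l - 6) - 2 * k * m * c0| ≤ 10000 * ε * m * (1 + l) := by
  have hεm : ε * m ≤ 1 := by
    have : (ε * m)^2 ≤ 1^2 := by nlinarith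
    exact le_of_sq_le_sq this (by norm_num)
  have hεl : ε * l ≤ m := by nlinarith
  have hεl0 : 0 ≤ ε * l := by positivity
  set δ := p - k with hδ
  set δ' := p' - k with hδ'
  set α := s - 1 with hα
  set α' := s' - 1 with hα'
  have e : S0 * (k^2 * l - 6) - 2 * k * m * c0 =
      k^2 * l * (S0 - S) - l * S * (k * (δ + δ') + δ * δ') - 6 * (S0 - S)
      + 6 * S * (α + α' + α * α') - 2 * k * m * (c0 - c)
      + m * c * (δ + δ' + δ * α' + δ' * α + k * (α + α')) := by
    have h1 : p = k + δ := by ring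
    have h2 : p' = k + δ' := by ring
    have h3 : s = 1 + α := by ring
    have h4 : s' = 1 + α' := by ring
    rw [h1, h2, h3, h4] at hdet
    linear_combination hdet
  set D := 360 * ε * (1 + ε * l) with hD
  set A := 4 * ε * l with hA
  have hSε : |S| * (ε * l) ≤ m := by
    calc _ ≤ 1 * (ε * l) := by gcongr
      _ ≤ m := by linarith
  have hSm : |S| * (1 + ε * l) ≤ 2 * m := by linarith
  have hD0 : 0 ≤ D := by positivity
  have hA0 : 0 ≤ A := by positivity
  have hD1 : D ≤ 1 := by rw [hD]; nlinarith
  have t1 : |k^2 * l * (S0 - S)| ≤ 1 * l * (2 * ε * m) := by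
    rw [abs_mul, abs_mul, abs_of_nonneg hl, abs_of_nonneg (sq_nonneg k)]
    gcongr; nlinarith
  have t2 : |l * S * (k * (δ + δ') + δ * δ')| ≤ 2160 * (ε * m * l) := by
    have g : |k * (δ + δ') + δ * δ'| ≤ 3 * D := by
      calc _ ≤ k * (|δ| + |δ'|) + |δ| * |δ'| := by
            refine (abs_add_le _ _).trans ?_
            rw [abs_mul, abs_mul, abs_of_nonneg hk0]
            gcongr; exact abs_add_le _ _
        _ ≤ 1 * (D + D) + D * 1 := by
            gcongr
            · linarith
            · exact hp'.trans hD1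
        _ = _ := by ring
    rw [abs_mul, abs_mul, abs_of_nonneg hl]
    calc _ ≤ l * |S| * (3 * D) := by gcongr
      _ = 1080 * (ε * l) * (|S| * (1 + ε * l)) := by rw [hD]; ring
      _ ≤ 1080 * (ε * l) * (2 * m) := by gcongr
      _ = _ := by ring
  have t3 : |6 * (S0 - S)| ≤ 6 * (2 * ε * m) := by
    rw [abs_mul, abs_of_pos (by norm_num : (0:ℝ) < 6)]; gcongr
  have t4 : |6 * S * (α + α' + α * α')| ≤ 144 * (ε * m * l) := by
    have g : |α + α' + α * α'| ≤ A + A + A * A := by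
      refine (abs_add_le _ _).trans ?_
      have g1 := abs_add_le α α'
      have g2 : |α * α'| ≤ A * A := by rw [abs_mul]; gcongr
      linarith
    have g3 : |S| * (2 + 4 * (ε * l)) ≤ 6 * m := by
      linarith
    rw [abs_mul, abs_mul, abs_of_pos (by norm_num : (0:ℝ) < 6)]
    calc _ ≤ 6 * |S| * (A + A + A * A) := by gcongr
      _ = 24 * (ε * l) * (|S| * (2 + 4 * (ε * l))) := by rw [hA]; ring
      _ ≤ 24 * (ε * l) * (6 * m) := by gcongr
      _ = _ := by ring
  have t5 : |2 * k * m * (c0 - c)| ≤ 2 * 1 * m * (2 * ε * m) := by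
    rw [abs_mul, abs_mul, abs_mul, abs_of_pos (by norm_num : (0:ℝ) < 2), abs_of_nonneg hk0, abs_of_pos hm]
    gcongr; linarith
  have t6 : |m * c * (δ + δ' + δ * α' + δ' * α + k * (α + α'))| ≤
      m * 1 * (D + D + D * A + D * A + 1 * (A + A)) := by
    rw [abs_mul, abs_mul, abs_of_pos hm]
    gcongr
    have g1 := abs_add_le (δ + δ' + δ * α' + δ' * α) (k * (α + α'))
    have g2 := abs_add_le (δ + δ' + δ * α') (δ' * α)
    have g3 := abs_add_le (δ + δ') (δ * α')
    have g4 := abs_add_le δ δ'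
    have g5 := abs_add_le α α'
    have g6 : |δ * α'| ≤ D * A := by rw [abs_mul]; gcongr
    have g7 : |δ' * α| ≤ D * A := by rw [abs_mul]; gcongr
    have g8 : |k * (α + α')| ≤ 1 * (A + A) := by
      rw [abs_mul, abs_of_nonneg hk0]; gcongr <;> linarith
    linarith
  have t6' : m * 1 * (D + D + D * A + D * A + 1 * (A + A)) ≤ 728 * (ε * m * (1 + l)) := by
    have g1 : (1 + ε * l) * (1 + 4 * (ε * l)) ≤ 1 + l := by
      have g2 : ε * l ≤ 1/1000 * l := by gcongr
      have g3 : l * (l * ε^2) ≤ l * (1/1000) := by gcongr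
      linarith
    have g4 : ε * m * ((1 + ε * l) * (1 + 4 * (ε * l))) ≤ ε * m * (1 + l) := by gcongr
    have g5 : 0 ≤ ε * m := by positivity
    calc _ = 720 * (ε * m * ((1 + ε * l) * (1 + 4 * (ε * l)))) + 8 * (ε * m * l) := by
          rw [hD, hA]; ring
      _ ≤ _ := by linarith
  have t5' : 2 * 1 * m * (2 * ε * m) ≤ 24 * (ε * m * (1 + l)) := by
    have g1 : m ≤ 6 * (1 + l) := by nlinarith [sq_nonneg (m - 1)]
    calc _ = 4 * (ε * m) * m := by ring
      _ ≤ 4 * (ε * m) * (6 * (1 + l)) := by gcongr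
      _ = _ := by ring
  have g5 : 0 ≤ ε * m := by positivity
  have g6 : 0 ≤ ε * m * l := by positivity
  rw [e]
  rw [abs_le] at t1 t2 t3 t4 t5 t6 ⊢
  constructor <;> linarith [t1.1, t1.2, t2.1, t2.2, t3.1, t3.2, t4.1, t4.2, t5.1, t5.2, t6.1, t6.2]

set_option maxHeartbeats 2000000 in
lemma main_est (ε l : ℝ) (hε : 0 < ε) (hε1 : ε ≤ 1/1000) (hl : 0 < l) (hle : l * ε^2 ≤ 1/1000)
    (u u' u'' : ℝ → ℝ)
    (hu : ∀ x ∈ Icc (0:ℝ) 1, HasDerivAt u (u' x) x)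
    (hu' : ∀ x ∈ Icc (0:ℝ) 1, HasDerivAt u' (u'' x) x)
    (heq : ∀ x ∈ Icc (0:ℝ) 1, phi2 ε x * u'' x + phi1 ε x * u' x = l * u x)
    (hne : ∃ x ∈ Icc (0:ℝ) 1, u x ≠ 0) :
    |sin (√(6 * l)) * ((2 * √3 - 3)^2 * l - 6) - 2 * (2 * √3 - 3) * √(6 * l) * cos (√(6 * l))|
      ≤ 10000 * ε * √(6 * l) * (1 + l) := by
  have hr : √3 ^ 2 = (3:ℝ) := Real.sq_sqrt (by norm_num)
  have hr0 : 0 ≤ √(3:ℝ) := Real.sqrt_nonneg _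
  have hr1 : 1.7 < √(3:ℝ) := by nlinarith
  have hr2 : √(3:ℝ) < 1.8 := by nlinarith
  set r := √(3:ℝ) with hrdef
  have hml : √(6 * l) ^ 2 = 6 * l := Real.sq_sqrt (by positivity)
  have hm : 0 < √(6 * l) := Real.sqrt_pos.2 (by positivity)
  set m := √(6 * l) with hmdef
  obtain ⟨a, s, p, hA, hB, hs, hp, ha⟩ := left_end r ε l hr hr1 hr2 hε (by linarith) hl.le
    (by linarith) u u' u''
    (fun x hx => hu x ⟨hx.1, by linarith [hx.2]⟩) (fun x hx => hu' x ⟨hx.1, by linarith [hx.2]⟩)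
    (fun x hx => by
      have := heq x ⟨hx.1, by linarith [hx.2]⟩
      rw [phi2, phi1, if_pos hx.2, if_pos hx.2] at this
      exact this)
  have hsub : ∀ x : ℝ, HasDerivAt (fun x => 1 - x) (-1) x := fun x => by
    simpa using (hasDerivAt_id x).const_sub 1
  obtain ⟨a', s', p', hA', hB', hs', hp', ha'⟩ := left_end r ε l hr hr1 hr2 hε (by linarith) hl.le
    (by linarith) (fun x => u (1 - x)) (fun x => - u' (1 - x)) (fun x => u'' (1 - x))
    (fun x hx => by
      have := (hu (1 - x) ⟨by linarith [hx.2], by linarith [hx.1]⟩).comp x (hsub x)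
      refine this.congr_deriv ?_
      ring)
    (fun x hx => by
      have := ((hu' (1 - x) ⟨by linarith [hx.2], by linarith [hx.1]⟩).comp x (hsub x)).neg
      refine this.congr_deriv ?_
      ring)
    (fun x hx => by
      have := heq (1 - x) ⟨by linarith [hx.2], by linarith [hx.1]⟩
      have h1 : ¬ (1 - x ≤ ε) := by linarith [hx.2]
      rw [phi2, phi1, if_neg h1, if_neg h1] at this
      rw [← this]
      rcases hx.2.eq_or_lt with h2 | h2
      · subst h2
        rw [if_pos le_rfl, if_pos le_rfl, div_self hε.ne']
        ring
      · have h3 : ¬ (1 - x ≤ 1 - ε) := by linarith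
        rw [if_neg h3, if_neg h3, sub_sub_cancel]
        ring)
  have hmid := middle m ε (1 - ε) hm u u' u''
    (fun x hx => hu x ⟨by linarith [hx.1], by linarith [hx.2]⟩)
    (fun x hx => hu' x ⟨by linarith [hx.1], by linarith [hx.2]⟩)
    (fun x hx => by
      have := heq x ⟨by linarith [hx.1], by linarith [hx.2]⟩
      rw [hml]
      rcases hx.1.eq_or_lt with h2 | h2
      · subst h2
        rw [phi2, phi1, if_pos le_rfl, if_pos le_rfl, div_self hε.ne'] at this
        linarith
      · have h3 : ¬ (x ≤ ε) := by linarith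
        rw [phi2, phi1, if_neg h3, if_neg h3, if_pos hx.2, if_pos hx.2] at this
        linarith)
  obtain ⟨hE1, hE2⟩ := hmid (1 - ε) ⟨by linarith, le_rfl⟩
  set θ := m * (1 - ε - ε) with hθ
  rw [hA, hB, hA'] at hE1
  have hB'' : u' (1 - ε) = a' * l * p' := by linarith
  rw [hA, hB, hB''] at hE2
  have hl6 : l = m^2 / 6 := by linarith
  have hE1' : a * (s * cos θ - m / 6 * p * sin θ) = a' * s' := by
    rw [hE1]
    rw [hl6]; field_simp; ring
  have hE2' : a * (- (6 * s * sin θ) - m * p * cos θ) = a' * (m * p') := by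
    have : m * (a * (- (6 * s * sin θ) - m * p * cos θ)) = m * (a' * (m * p')) := by
      rw [hl6] at hE2
      linear_combination (-6) * hE2
    exact mul_left_cancel₀ hm.ne' this
  have hor : a ≠ 0 ∨ a' ≠ 0 := by
    by_contra hcon
    push Not at hcon
    obtain ⟨x, hx, hxn⟩ := hne
    apply hxn
    rcases le_total x ε with h1 | h1
    · exact ha hcon.1 x ⟨hx.1, h1⟩
    rcases le_total x (1 - ε) with h2 | h2
    · rw [(hmid x ⟨h1, h2⟩).1, hA, hB, hcon.1]; simp
    · have := ha' hcon.2 (1 - x) ⟨by linarith [hx.2], by linarith⟩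
      rwa [sub_sub_cancel] at this
  have hdet : l * p * p' * sin θ - 6 * s * s' * sin θ - m * cos θ * (p * s' + p' * s) = 0 := by
    rw [hl6]
    rcases hor with h | h
    · apply mul_left_cancel₀ h
      linear_combination (-(m * p')) * hE1' + s' * hE2'
    · apply mul_left_cancel₀ h
      linear_combination (s * cos θ - m / 6 * p * sin θ) * hE2'
        - (- (6 * s * sin θ) - m * p * cos θ) * hE1'
  have hθ0 : 0 ≤ θ := by rw [hθ]; exact mul_nonneg hm.le (by linarith)
  have hθm : θ ≤ m := by rw [hθ]; nlinarith
  have hd : |m - θ| = 2 * ε * m := by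
    rw [abs_of_nonneg (by linarith), hθ]; ring
  refine final_est (2 * r - 3) ε l m s p s' p' (sin θ) (cos θ) (sin m) (cos m) (by linarith)
    (by linarith) hε hl.le hm hml hε1 hle hs hp hs' hp' ?_ (abs_sin_le_one _) (abs_cos_le_one _) ?_ ?_ hdet
  · exact (abs_sin_le_abs).trans (by rw [abs_of_nonneg hθ0]; exact hθm)
  · rw [← hd]; exact abs_sin_sub_sin_le m θ
  · rw [← hd]; exact abs_cos_sub_cos_le m θ

theorem stmt11 (ε₁ : ℝ) (hε₁ : 0 < ε₁) (lam : ℝ → ℝ) (u u' u'' : ℝ → ℝ → ℝ)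
    (hfam : ∀ ε ∈ Ioc (0:ℝ) ε₁,
      0 ≤ lam ε ∧
      (∀ x ∈ Icc (0:ℝ) 1, HasDerivAt (u ε) (u' ε x) x) ∧
      (∀ x ∈ Icc (0:ℝ) 1, HasDerivAt (u' ε) (u'' ε x) x) ∧
      ContinuousOn (u'' ε) (Icc 0 1) ∧
      (∀ x ∈ Icc (0:ℝ) 1, phi2 ε x * u'' ε x + phi1 ε x * u' ε x = lam ε * u ε x) ∧
      (∃ x ∈ Icc (0:ℝ) 1, u ε x ≠ 0))
    (hlim : Tendsto (fun ε => lam ε * ε^2) (𝓝[>] (0:ℝ)) (𝓝 0)) :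
    ∃ C > (0:ℝ), ∃ ε₀ : ℝ, 0 < ε₀ ∧ ε₀ ≤ ε₁ ∧ ∀ ε : ℝ, 0 < ε → ε ≤ ε₀ →
      |Real.sin (Real.sqrt (6*lam ε)) * ((21 - 12*Real.sqrt 3) * lam ε - 6) +
        2*Real.sqrt (6*lam ε) * (3 - 2*Real.sqrt 3) * Real.cos (Real.sqrt (6*lam ε))|
        ≤ C * ε * (lam ε) ^ ((3:ℝ)/2) := by
  have hev := hlim.eventually (gt_mem_nhds (show (0:ℝ) < 1/1000 by norm_num))
  obtain ⟨ε₂, hε₂, hsmall⟩ := mem_nhdsGT_iff_exists_Ioo_subset.1 hev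
  have hε₂ : 0 < ε₂ := hε₂
  refine ⟨1000000, by norm_num, min ε₁ (min (ε₂ / 2) (1/100000)), by positivity, min_le_left _ _, ?_⟩
  intro ε hε hεle
  have h1 : ε ≤ ε₁ := hεle.trans (min_le_left _ _)
  have h2 : ε ≤ ε₂ / 2 := hεle.trans ((min_le_right _ _).trans (min_le_left _ _))
  have h3 : ε ≤ 1/100000 := hεle.trans ((min_le_right _ _).trans (min_le_right _ _))
  have hle : lam ε * ε^2 < 1/1000 := hsmall ⟨hε, by linarith⟩
  obtain ⟨hl, hu, hu', -, heq, hne⟩ := hfam ε ⟨hε, h1⟩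
  rcases hl.eq_or_lt with hl0 | hl0
  · rw [← hl0]
    simp
  have hmain := main_est ε (lam ε) hε (by linarith) hl0 hle.le (u ε) (u' ε) (u'' ε) hu hu' heq hne
  set l := lam ε with hldef
  have hr : √3 ^ 2 = (3:ℝ) := Real.sq_sqrt (by norm_num)
  have hr0 : 0 ≤ √(3:ℝ) := Real.sqrt_nonneg _
  have hr1 : 1.7 < √(3:ℝ) := by nlinarith
  have hr2 : √(3:ℝ) < 1.8 := by nlinarith
  have hk2 : (2 * √3 - 3)^2 = 21 - 12 * √(3:ℝ) := by linear_combination 4 * hr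
  have hml : √(6 * l) ^ 2 = 6 * l := Real.sq_sqrt (by positivity)
  have hm : 0 < √(6 * l) := Real.sqrt_pos.2 (by positivity)
  have hFe : sin (√(6 * l)) * ((21 - 12 * √3) * l - 6) + 2 * √(6 * l) * (3 - 2 * √3) * cos (√(6 * l))
      = sin (√(6 * l)) * ((2 * √3 - 3)^2 * l - 6) - 2 * (2 * √3 - 3) * √(6 * l) * cos (√(6 * l)) := by
    rw [hk2]; ring
  rw [hFe]
  have hpow : l ^ ((3:ℝ)/2) = l * √l := by
    rw [show (3:ℝ)/2 = 1 + 1/2 by norm_num, Real.rpow_add hl0, Real.rpow_one, Real.sqrt_eq_rpow]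
  rw [hpow]
  rcases le_or_gt (1/24) l with hc | hc
  · refine hmain.trans ?_
    have h6 : √(6 * l) ≤ 3 * √l := by
      rw [Real.sqrt_mul (by norm_num)]
      gcongr
      rw [Real.sqrt_le_left (by norm_num)]; norm_num
    calc 10000 * ε * √(6 * l) * (1 + l) ≤ 10000 * ε * (3 * √l) * (25 * l) := by
          gcongr; linarith
      _ = 750000 * (ε * (l * √l)) := by ring
      _ ≤ 1000000 * (ε * (l * √l)) := by gcongr; norm_num
      _ = _ := by ring
  · exfalso
    set m := √(6 * l) with hmdef
    have hm1 : m ≤ 1/2 := by nlinarith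
    have hsin : 0 ≤ sin m := sin_nonneg_of_nonneg_of_le_pi hm.le (by linarith [pi_gt_three])
    have hcos : 1/2 ≤ cos m := by
      have := one_sub_sq_div_two_le_cos (x := m)
      nlinarith
    have hneg := (abs_le.1 hmain).1
    have t1 : sin m * ((2 * √3 - 3)^2 * l - 6) ≤ 0 :=
      mul_nonpos_of_nonneg_of_nonpos hsin (by nlinarith)
    have t2 : 0.8 * m * (1/2) ≤ 2 * (2 * √3 - 3) * m * cos m := by
      have g : 0.8 * m ≤ 2 * (2 * √3 - 3) * m := by gcongr; linarith
      exact mul_le_mul g hcos (by norm_num) (by linarith)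
    have t3 : 10000 * ε * m * (1 + l) ≤ 10000 * (1/100000) * m * (1 + 1/24) := by
      gcongr
    linarith
end
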